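/- arXiv:1701.00888 — 9 statements merged into one kernel-verified Lean document; each statement's English description precedes it below -/
import Mathlib

section
/- The root in (r, 1) of equation (E2) is unique: if a, a' ∈ (r, 1) both satisfy log a − Δ0(1/a − 1) ≠ 0, log a' − Δ0(1/a' − 1) ≠ 0, and the equation (2(1+Δ1(a))/a)(1 + (1 + Δ0/a)/(log a − Δ0(1/a − 1))) = 1/(δc + a) − 1/(c − a) + 2Δ2(a) (and likewise for a'), then a = a'. -/
/-!
Write `S x = √((c - x)(δc + x))`, let `L x = m x + b` be the chord of `S` over `[r, 1]`, and put
`T = S + L`, `N x = Δ0 (1 - x) - x log x`. Then `Del1 = L / S`, `Del2 = m / S`, and clearing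
denominators turns (E2) into `N' T - N T' = 0`: the roots are the critical points of `N / T`
(`wronskian_eq_zero_of_E2`). Here `N` is strictly concave, vanishes at `r` and `1` and is positive in
between. It suffices that the function `G = N' T - N T'` has a negative derivative at each of its
zeros in `(r, 1)`, for then it has at most one zero (`unique_zero_of_deriv_neg`).

Since `S'' = -D² / (4 S³)` with `D = c (1 + δ)`, the derivative is `G' = -T / x + N D² / (4 S³)`, so
the claim at a zero `z` is `z N D² < 4 S³ T`. Put `ℓ = -log z` and note `L ≤ S`.

* For small `z` there is no zero at all (`no_zero_of_small`): `z T' < S / 2 + L` whereas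
  `z N' / N > (ℓ - 1) / ℓ`, which excludes a zero if `ℓ ≥ 4`, or if `ℓ ≥ 3` and `L ≤ S / 2`.
* In a middle range the bound `N < z ℓ`, together with `T ≥ S` (if `ℓ ≤ 3`) or `T ≥ 3 S / 2` (if
  `3 ≤ ℓ ≤ 4` and `L ≥ S / 2`), gives the claim (`key_ineq_of_log_le`). The same
  estimate works for all `z ≥ 1/2` when `c ≥ 2`.
* If `z ≥ 1/2` and `c < 2`, then `S³ / x` is strictly decreasing on `[z, 1]`. Were the claim false,
  with `k = N z / T z` the function `F = N - k T` would satisfy `F z = F' z = 0` and `F'' > 0` on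
  `(z, 1)`, hence `F 1 > 0`; but `F 1 = -k T 1 < 0` (`key_ineq_of_large`).
-/

open Real

/-- `Δ₁(a)` from Lemma 1. -/
noncomputable def Del1 (c δ r a : ℝ) : ℝ :=
  ((a - r) * Real.sqrt ((c - 1) * (δ * c + 1)) + (1 - a) * Real.sqrt ((c - r) * (δ * c + r)))
    / ((1 - r) * Real.sqrt ((c - a) * (δ * c + a)))

/-- `Δ₂(a)` from Lemma 1. -/
noncomputable def Del2 (c δ r a : ℝ) : ℝ :=
  (Real.sqrt ((c - 1) * (δ * c + 1)) - Real.sqrt ((c - r) * (δ * c + r)))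
    / ((1 - r) * Real.sqrt ((c - a) * (δ * c + a)))

/-! ### The functions `S` and `N` and their derivatives -/

/-- The square root `√((c - x)(δc + x))` occurring in `Del1` and `Del2`. -/
noncomputable def rootS (c δ x : ℝ) : ℝ := Real.sqrt ((c - x) * (δ * c + x))

/-- The derivative of `rootS`, valid for `0 < x < c`. -/
noncomputable def rootS' (c δ x : ℝ) : ℝ := (c - δ * c - 2 * x) / (2 * rootS c δ x)

/-- The entropy-like function `e (1 - x) - x log x`, used with `e = Δ0`. -/
noncomputable def entN (e x : ℝ) : ℝ := e * (1 - x) - x * Real.log x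

/-- The derivative of `entN`, valid for `x ≠ 0`. -/
noncomputable def entN' (e x : ℝ) : ℝ := -Real.log x - 1 - e

section

variable {c δ x : ℝ}

lemma radicand_pos (hδ : 0 ≤ δ) (hx : 0 < x) (hxc : x < c) : 0 < (c - x) * (δ * c + x) := by
  have : 0 < c := hx.trans hxc
  have h : 0 ≤ δ * c := by positivity
  exact mul_pos (by linarith) (by linarith)

lemma rootS_pos (hδ : 0 ≤ δ) (hx : 0 < x) (hxc : x < c) : 0 < rootS c δ x :=
  Real.sqrt_pos.2 (radicand_pos hδ hx hxc)

lemma rootS_sq (hδ : 0 ≤ δ) (hx : 0 < x) (hxc : x < c) :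
    rootS c δ x ^ 2 = (c - x) * (δ * c + x) :=
  Real.sq_sqrt (radicand_pos hδ hx hxc).le

lemma hasDerivAt_rootS (hδ : 0 ≤ δ) (hx : 0 < x) (hxc : x < c) :
    HasDerivAt (rootS c δ) (rootS' c δ x) x := by
  have h1 : HasDerivAt (fun y : ℝ => (c - y) * (δ * c + y)) (c - δ * c - 2 * x) x := by
    have := ((hasDerivAt_id x).const_sub c).mul ((hasDerivAt_id x).const_add (δ * c))
    refine this.congr_deriv ?_
    simp only [id_eq]
    ring
  exact h1.sqrt (radicand_pos hδ hx hxc).ne'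

/-- `S'' = -D² / (4 S³)` with `D = c (1 + δ)`; this uses `4λ + λ'² = D²` for the radicand `λ`. -/
lemma hasDerivAt_rootS' (hδ : 0 ≤ δ) (hx : 0 < x) (hxc : x < c) :
    HasDerivAt (rootS' c δ) (-(c * (1 + δ)) ^ 2 / (4 * rootS c δ x ^ 3)) x := by
  have hS := rootS_pos hδ hx hxc
  have h1 : HasDerivAt (fun y : ℝ => c - δ * c - 2 * y) (-2) x := by
    have := ((hasDerivAt_id x).const_mul 2).const_sub (c - δ * c)
    simpa using this
  have h2 := (hasDerivAt_rootS hδ hx hxc).const_mul 2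
  have h3 := h1.div h2 (by positivity)
  refine h3.congr_deriv ?_
  have hsq := rootS_sq hδ hx hxc
  unfold rootS'
  field_simp
  rw [hsq]
  ring

end

lemma hasDerivAt_entN (e : ℝ) {x : ℝ} (hx : x ≠ 0) : HasDerivAt (entN e) (entN' e x) x := by
  have h1 := ((hasDerivAt_id x).const_sub 1).const_mul e
  have h2 := Real.hasDerivAt_mul_log hx
  refine (h1.sub h2).congr_deriv ?_
  unfold entN'
  ring

lemma hasDerivAt_entN' (e : ℝ) {x : ℝ} (hx : x ≠ 0) : HasDerivAt (entN' e) (-(1 / x)) x := by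
  have h := ((Real.hasDerivAt_log hx).neg.sub_const 1).sub_const e
  refine h.congr_deriv ?_
  simp

/-! ### The sign of the derivative at a zero -/

/-- A function whose derivative is negative at each of its zeros has at most one zero. -/
lemma unique_zero_of_deriv_neg {G G' : ℝ → ℝ} {r : ℝ}
    (hG : ∀ x ∈ Set.Ioo r 1, HasDerivAt G (G' x) x)
    (hneg : ∀ x ∈ Set.Ioo r 1, G x = 0 → G' x < 0) {a b : ℝ}
    (ha : a ∈ Set.Ioo r 1) (hb : b ∈ Set.Ioo r 1) (hab : a < b)
    (hGa : G a = 0) (hGb : G b = 0) : False := by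
  have hsub : ∀ x ∈ Set.Icc a b, x ∈ Set.Ioo r 1 := fun x hx =>
    ⟨lt_of_lt_of_le ha.1 hx.1, lt_of_le_of_lt hx.2 hb.2⟩
  -- Fencing: `G` cannot cross zero upwards, so it stays nonpositive to the right of `a`.
  have hle : ∀ ⦃x⦄, x ∈ Set.Icc a b → G x ≤ 0 := by
    refine image_le_of_deriv_right_lt_deriv_boundary (f' := G') (B := fun _ => 0) (B' := fun _ => 0)
      (fun x hx => (hG x (hsub x hx)).continuousAt.continuousWithinAt)
      (fun x hx => (hG x (hsub x ⟨hx.1, hx.2.le⟩)).hasDerivWithinAt) hGa.le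
      (fun x => hasDerivAt_const x 0)
      (fun x hx h0 => hneg x (hsub x ⟨hx.1, hx.2.le⟩) h0)
  -- But a negative derivative at the zero `b` makes `G` positive just to the left of `b`.
  have hd := (hG b hb).hasDerivWithinAt (s := Set.Iio b)
  have hslope := (hasDerivWithinAt_iff_tendsto_slope' (by simp)).1 hd
  have hev := hslope.eventually (gt_mem_nhds (hneg b hb hGb))
  have hev2 : ∀ᶠ y in nhdsWithin b (Set.Iio b), y ∈ Set.Ioo a b := Ioo_mem_nhdsLT hab
  obtain ⟨y, hy1, hy2⟩ := (hev.and hev2).exists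
  have hy3 := hle ⟨hy2.1.le, hy2.2.le⟩
  rw [slope_def_field, hGb] at hy1
  have : 0 ≤ (G y - 0) / (y - b) :=
    div_nonneg_of_nonpos (by linarith) (by linarith [hy2.2])
  have h4 : (0 - G y) / (b - y) = (G y - 0) / (y - b) := by
    rw [← neg_div_neg_eq]; ring_nf
  linarith

/-- Small `z`: `z T' < S / 2 + L` and `z N' / N > (ℓ - 1) / ℓ` rule out a zero of `N' T - N T'` as
soon as `2 L ≤ (ℓ - 2) S`, where `ℓ = -log z`. -/
lemma no_zero_of_small {c δ e m b z : ℝ} (hc : 1 < c) (hδ : 0 ≤ δ) (he : e < 0) (hz : 0 < z)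
    (hz1 : z < 1) (hN : 0 < entN e z) (hb : 0 ≤ b) (hL0 : 0 ≤ m * z + b)
    (hcase : 2 * (m * z + b) ≤ (-Real.log z - 2) * rootS c δ z)
    (h0 : entN' e z * (rootS c δ z + (m * z + b)) - entN e z * (rootS' c δ z + m) = 0) : False := by
  have hzc : z < c := hz1.trans hc
  have hS := rootS_pos hδ hz hzc
  have hsq := rootS_sq hδ hz hzc
  set S := rootS c δ z with hSdef
  have hS1 : z * rootS' c δ z < S / 2 := by
    unfold rootS'
    rw [← hSdef, ← mul_div_assoc, div_lt_iff₀ (by positivity)]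
    have : S / 2 * (2 * S) = (c - z) * (δ * c + z) := by rw [← hsq]; ring
    rw [this]
    have : 0 ≤ δ * c := mul_nonneg hδ (by linarith)
    nlinarith [mul_pos hz hz, mul_nonneg this (sub_pos.2 hzc).le, mul_nonneg this hz.le]
  have hT1 : z * (rootS' c δ z + m) < S / 2 + (m * z + b) := by nlinarith
  have hNle : entN e z ≤ z * (-Real.log z) := by
    unfold entN
    nlinarith [mul_pos (neg_pos.2 he) (sub_pos.2 hz1)]
  have hN1 : -Real.log z - 1 ≤ entN' e z := by unfold entN'; linarith
  set l := -Real.log z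
  set L := m * z + b
  have h1 : entN e z * (z * (rootS' c δ z + m)) < entN e z * (S / 2 + L) :=
    mul_lt_mul_of_pos_left hT1 hN
  have h2 : entN e z * (S / 2 + L) ≤ z * l * (S / 2 + L) :=
    mul_le_mul_of_nonneg_right hNle (by linarith)
  have h3 : z * ((l - 1) * (S + L)) ≤ z * (entN' e z * (S + L)) :=
    mul_le_mul_of_nonneg_left (mul_le_mul_of_nonneg_right hN1 (by linarith)) hz.le
  have h4 : z * (l * (S / 2 + L)) ≤ z * ((l - 1) * (S + L)) :=
    mul_le_mul_of_nonneg_left (by linarith) hz.le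
  have h5 : z * (entN' e z * (S + L)) = entN e z * (z * (rootS' c δ z + m)) := by
    linear_combination z * h0
  linarith

/-- The derivative sign from `N < z ℓ` and `z (1 + δ) ≤ z + δ c`; the parameter `t` is a lower bound
for `L / S`. -/
lemma key_ineq_of_log_le {c δ e L z t : ℝ} (hc : 1 < c) (hδ : 0 ≤ δ) (he : e < 0) (hz : 0 < z)
    (hz1 : z < 1) (hL : t * rootS c δ z ≤ L)
    (hlog : -Real.log z * c ^ 2 ≤ 4 * (1 + t) * (c - z) ^ 2) :
    z * entN e z * (c * (1 + δ)) ^ 2 < 4 * rootS c δ z ^ 3 * (rootS c δ z + L) := by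
  have hzc : z < c := hz1.trans hc
  have hS := rootS_pos hδ hz hzc
  have hsq := rootS_sq hδ hz hzc
  set S := rootS c δ z with hSdef
  have hNlt : entN e z < z * (-Real.log z) := by
    unfold entN
    nlinarith [mul_pos (neg_pos.2 he) (sub_pos.2 hz1)]
  have h1 : z * entN e z * (c * (1 + δ)) ^ 2 < z * (z * (-Real.log z)) * (c * (1 + δ)) ^ 2 := by
    gcongr
  have hd : 0 ≤ δ * (c - z) := mul_nonneg hδ (by linarith)
  have h2 : (z * (1 + δ)) ^ 2 ≤ (δ * c + z) ^ 2 :=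
    pow_le_pow_left₀ (by positivity) (by linarith) 2
  have hl : 0 ≤ -Real.log z := by linarith [Real.log_neg hz hz1]
  have h3 : (z * (1 + δ)) ^ 2 * (-Real.log z * c ^ 2)
      ≤ (δ * c + z) ^ 2 * (4 * (1 + t) * (c - z) ^ 2) := by
    gcongr
  have h4 : 4 * S ^ 3 * (S + t * S) ≤ 4 * S ^ 3 * (S + L) := by gcongr
  have h5 : (δ * c + z) ^ 2 * (4 * (1 + t) * (c - z) ^ 2) = 4 * S ^ 3 * (S + t * S) := by
    have : 4 * S ^ 3 * (S + t * S) = 4 * (1 + t) * (S ^ 2) ^ 2 := by ring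
    rw [this, hsq]; ring
  calc _ < _ := h1
    _ = (z * (1 + δ)) ^ 2 * (-Real.log z * c ^ 2) := by ring
    _ ≤ _ := h3
    _ = _ := h5
    _ ≤ _ := h4

/-- `S³ / x` is strictly decreasing on `[c / 4, 1]`: its square is the product of `(c - x)³ x` and
`((δc + x) / x)³`. -/
lemma rootS_cube_div_strictAnti {c δ x y : ℝ} (hc : 1 < c) (hδ : 0 ≤ δ) (hx : 0 < x)
    (hcx : c ≤ 4 * x) (hxy : x < y) (hy : y ≤ 1) :
    x * rootS c δ y ^ 3 < y * rootS c δ x ^ 3 := by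
  have hy0 : 0 < y := hx.trans hxy
  have hyc : y < c := by linarith
  have hxc : x < c := by linarith
  have hSx := rootS_pos hδ hx hxc
  have hSy := rootS_pos hδ hy0 hyc
  have hsx := rootS_sq hδ hx hxc
  have hsy := rootS_sq hδ hy0 hyc
  have hdc : 0 ≤ δ * c := mul_nonneg hδ (by linarith)
  refine lt_of_pow_lt_pow_left₀ 2 (by positivity) ?_
  have e1 : (x * rootS c δ y ^ 3) ^ 2 = ((c - y) * (δ * c + y)) ^ 3 * x ^ 2 := by
    rw [← hsy]; ring
  have e2 : (y * rootS c δ x ^ 3) ^ 2 = ((c - x) * (δ * c + x)) ^ 3 * y ^ 2 := by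
    rw [← hsx]; ring
  rw [e1, e2]
  have hA : (c - y) ^ 3 * y < (c - x) ^ 3 * x := by
    have hv : 0 < c - y := by linarith
    have h1 : (c - y) ^ 3 < x * ((c - x) ^ 2 + (c - x) * (c - y) + (c - y) ^ 2) := by
      have h2 : (c - y) ^ 3 < 3 * x * (c - y) ^ 2 := by
        have : c - y < 3 * x := by linarith
        have := mul_lt_mul_of_pos_right this (pow_pos hv 2)
        linarith
      have h3 : 3 * (c - y) ^ 2 ≤ (c - x) ^ 2 + (c - x) * (c - y) + (c - y) ^ 2 := by nlinarith
      have := mul_le_mul_of_nonneg_left h3 hx.le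
      linarith
    have := mul_lt_mul_of_pos_right h1 (sub_pos.2 hxy)
    linarith
  have hB : (x * (δ * c + y)) ^ 3 ≤ (y * (δ * c + x)) ^ 3 := by
    refine pow_le_pow_left₀ (by positivity) ?_ 3
    nlinarith
  have hB0 : 0 < (y * (δ * c + x)) ^ 3 := by positivity
  have hA0 : 0 ≤ (c - y) ^ 3 * y := mul_nonneg (pow_nonneg (by linarith) 3) hy0.le
  have h := mul_lt_mul_of_pos_right hA hB0
  have h' := mul_le_mul_of_nonneg_left hB hA0
  have hlt := lt_of_le_of_lt h' h
  have hxy0 : 0 < x * y := by positivity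
  refine lt_of_mul_lt_mul_left ?_ hxy0.le
  linarith

/-- Zeros in `[c / 4, 1)`: if the derivative of `N' T - N T'` were nonnegative there, `N - k T` with
`k = N z / T z` would be strictly convex on `[z, 1]` and flat at its zero `z`, yet negative at `1`. -/
lemma key_ineq_of_large {c δ e m b z : ℝ} (hc : 1 < c) (hδ : 0 ≤ δ) (hz : 0 < z)
    (hz1 : z < 1) (hcz : c ≤ 4 * z) (hN : 0 < entN e z) (hL0 : 0 ≤ m * z + b) (hL1 : 0 ≤ m * 1 + b)
    (h0 : entN' e z * (rootS c δ z + (m * z + b)) - entN e z * (rootS' c δ z + m) = 0) :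
    z * entN e z * (c * (1 + δ)) ^ 2 < 4 * rootS c δ z ^ 3 * (rootS c δ z + (m * z + b)) := by
  by_contra! hcon
  have hSz := rootS_pos hδ hz (hz1.trans hc)
  have hT : 0 < rootS c δ z + (m * z + b) := by linarith
  obtain ⟨k, hk⟩ : ∃ k, k = entN e z / (rootS c δ z + (m * z + b)) := ⟨_, rfl⟩
  have hk0 : 0 < k := by rw [hk]; positivity
  have hkT : entN e z = k * (rootS c δ z + (m * z + b)) := by rw [hk]; field_simp
  have hk1 : 4 * rootS c δ z ^ 3 ≤ z * k * (c * (1 + δ)) ^ 2 := by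
    rw [hkT] at hcon
    refine le_of_mul_le_mul_right ?_ hT
    linarith
  let F : ℝ → ℝ := fun x => entN e x - k * (rootS c δ x + (m * x + b))
  let F1 : ℝ → ℝ := fun x => entN' e x - k * (rootS' c δ x + m)
  have hF : ∀ x ∈ Set.Icc z 1, HasDerivAt F (F1 x) x := by
    intro x hx
    have hx0 : 0 < x := lt_of_lt_of_le hz hx.1
    have hlin : HasDerivAt (fun y : ℝ => m * y + b) m x := by
      simpa using ((hasDerivAt_id x).const_mul m).add_const b
    exact (hasDerivAt_entN e hx0.ne').sub
      (((hasDerivAt_rootS hδ hx0 (lt_of_le_of_lt hx.2 hc)).add hlin).const_mul k)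
  have hF1 : ∀ x ∈ Set.Icc z 1, HasDerivAt F1
      (-(1 / x) - k * (-(c * (1 + δ)) ^ 2 / (4 * rootS c δ x ^ 3))) x := by
    intro x hx
    have hx0 : 0 < x := lt_of_lt_of_le hz hx.1
    exact (hasDerivAt_entN' e hx0.ne').sub
      (((hasDerivAt_rootS' hδ hx0 (lt_of_le_of_lt hx.2 hc)).add_const m).const_mul k)
  have hmono1 : StrictMonoOn F1 (Set.Icc z 1) := by
    refine strictMonoOn_of_deriv_pos (convex_Icc z 1)
      (fun x hx => (hF1 x hx).continuousAt.continuousWithinAt) ?_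
    intro x hx
    rw [interior_Icc] at hx
    rw [(hF1 x ⟨hx.1.le, hx.2.le⟩).deriv]
    have hx0 : 0 < x := hz.trans hx.1
    have hSx := rootS_pos hδ hx0 (hx.2.trans hc)
    have hanti := rootS_cube_div_strictAnti hc hδ hz hcz hx.1 hx.2.le
    have hmain : 4 * rootS c δ x ^ 3 < x * k * (c * (1 + δ)) ^ 2 := by
      refine lt_of_mul_lt_mul_left (a := z) ?_ hz.le
      have := mul_le_mul_of_nonneg_left hk1 hx0.le
      linarith
    have : -(1 / x) - k * (-(c * (1 + δ)) ^ 2 / (4 * rootS c δ x ^ 3))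
        = (x * k * (c * (1 + δ)) ^ 2 - 4 * rootS c δ x ^ 3) / (x * (4 * rootS c δ x ^ 3)) := by
      field_simp
      ring
    rw [this]
    exact div_pos (by linarith) (by positivity)
  have hF1z : F1 z = 0 := by
    have : F1 z * (rootS c δ z + (m * z + b)) = 0 := by
      simp only [F1]
      rw [hkT] at h0
      linear_combination h0
    exact (mul_eq_zero.1 this).resolve_right hT.ne'
  have hmono : StrictMonoOn F (Set.Icc z 1) := by
    refine strictMonoOn_of_deriv_pos (convex_Icc z 1)
      (fun x hx => (hF x hx).continuousAt.continuousWithinAt) ?_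
    intro x hx
    rw [interior_Icc] at hx
    rw [(hF x ⟨hx.1.le, hx.2.le⟩).deriv, ← hF1z]
    exact hmono1 ⟨le_rfl, hz1.le⟩ ⟨hx.1.le, hx.2.le⟩ hx.1
  have hlt := hmono ⟨le_rfl, hz1.le⟩ ⟨hz1.le, le_rfl⟩ hz1
  have hFz : F z = 0 := by simp only [F]; linarith
  have hF1' : F 1 < 0 := by
    have hS1 := rootS_pos hδ one_pos hc
    have : 0 < k * (rootS c δ 1 + (m * 1 + b)) := mul_pos hk0 (by linarith)
    simp only [F, entN, Real.log_one]
    linarith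
  linarith

/-- The elementary estimate `-log z ≤ 4 (1 - z)²` on `[e⁻³, 1/2]`, checked on four subintervals. -/
lemma neg_log_le {z : ℝ} (hz : 0 < z) (hz2 : z ≤ 1 / 2) (hl : -Real.log z ≤ 3) :
    -Real.log z ≤ 4 * (1 - z) ^ 2 := by
  have hlog2 := Real.log_two_lt_d9
  rcases le_total z (1 / 8) with h | h
  · nlinarith
  rcases le_total z (1 / 4) with h' | h'
  · have h1 : Real.log (1 / 8) ≤ Real.log z := Real.log_le_log (by norm_num) h
    have h2 : Real.log (1 / 8 : ℝ) = -(3 * Real.log 2) := by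
      rw [show (1 / 8 : ℝ) = (2 ^ 3)⁻¹ by norm_num, Real.log_inv, Real.log_pow]; norm_num
    nlinarith
  rcases le_total z (2 / 5) with h'' | h''
  · have h1 : Real.log (1 / 4) ≤ Real.log z := Real.log_le_log (by norm_num) h'
    have h2 : Real.log (1 / 4 : ℝ) = -(2 * Real.log 2) := by
      rw [show (1 / 4 : ℝ) = (2 ^ 2)⁻¹ by norm_num, Real.log_inv, Real.log_pow]; norm_num
    nlinarith
  · -- `(2/5)³ > 1/16`, so `-log z ≤ (4/3) log 2 < 1`.
    have h1 : Real.log (1 / 16) ≤ Real.log (z ^ 3) := by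
      refine Real.log_le_log (by norm_num) ?_
      have := pow_le_pow_left₀ (by norm_num) h'' 3
      norm_num at this ⊢
      linarith
    have h2 : Real.log (1 / 16 : ℝ) = -(4 * Real.log 2) := by
      rw [show (1 / 16 : ℝ) = (2 ^ 4)⁻¹ by norm_num, Real.log_inv, Real.log_pow]; norm_num
    rw [Real.log_pow] at h1
    push_cast at h1
    nlinarith

lemma lt_one_eighth {z : ℝ} (hl : 3 ≤ -Real.log z) : z < 1 / 8 := by
  by_contra! h
  have h1 : Real.log (1 / 8) ≤ Real.log z := Real.log_le_log (by norm_num) h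
  have h2 : Real.log (1 / 8 : ℝ) = -(3 * Real.log 2) := by
    rw [show (1 / 8 : ℝ) = (2 ^ 3)⁻¹ by norm_num, Real.log_inv, Real.log_pow]; norm_num
  linarith [Real.log_two_lt_d9]

/-- At every zero of `N' T - N T'` the derivative `-T / z + N D² / (4 S³)` is negative. -/
lemma key_ineq {c δ e m b z : ℝ} (hc : 1 < c) (hδ : 0 ≤ δ) (he : e < 0) (hz : 0 < z)
    (hz1 : z < 1) (hN : 0 < entN e z) (hb : 0 ≤ b) (hL0 : 0 ≤ m * z + b) (hL1 : 0 ≤ m * 1 + b)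
    (hLS : m * z + b ≤ rootS c δ z)
    (h0 : entN' e z * (rootS c δ z + (m * z + b)) - entN e z * (rootS' c δ z + m) = 0) :
    z * entN e z * (c * (1 + δ)) ^ 2 < 4 * rootS c δ z ^ 3 * (rootS c δ z + (m * z + b)) := by
  have hS := rootS_pos hδ hz (hz1.trans hc)
  -- `(1 - z) c ≤ c - z` transfers a bound on `ℓ` in terms of `z` to the form needed for `c`.
  have hcz : (1 - z) ^ 2 * c ^ 2 ≤ (c - z) ^ 2 := by
    rw [← mul_pow]
    exact pow_le_pow_left₀ (mul_nonneg (by linarith) (by linarith)) (by nlinarith) 2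
  have hc2 : 0 < c ^ 2 := by positivity
  rcases le_total z (1 / 2) with h2 | h2
  · rcases le_total (-Real.log z) 3 with h3 | h3
    · refine key_ineq_of_log_le (t := 0) hc hδ he hz hz1 (by simpa using hL0) ?_
      have := mul_le_mul_of_nonneg_right (neg_log_le hz h2 h3) hc2.le
      linarith
    · rcases le_total (m * z + b) (rootS c δ z / 2) with h4 | h4
      · exact (no_zero_of_small hc hδ he hz hz1 hN hb hL0 (by nlinarith) h0).elim
      · rcases le_total (-Real.log z) 4 with h5 | h5
        · refine key_ineq_of_log_le (t := 1 / 2) hc hδ he hz hz1 (by linarith) ?_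
          have h6 := lt_one_eighth h3
          have h7 : -Real.log z ≤ 6 * (1 - z) ^ 2 := by nlinarith
          have := mul_le_mul_of_nonneg_right h7 hc2.le
          linarith
        · exact (no_zero_of_small hc hδ he hz hz1 hN hb hL0 (by nlinarith) h0).elim
  · rcases le_total c 2 with h3 | h3
    · exact key_ineq_of_large hc hδ hz hz1 (by linarith) hN hL0 hL1 h0
    · refine key_ineq_of_log_le (t := 0) hc hδ he hz hz1 (by simpa using hL0) ?_
      have h1 : Real.log (1 / 2) ≤ Real.log z := Real.log_le_log (by norm_num) h2
      rw [one_div, Real.log_inv] at h1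
      have h4 : -Real.log z ≤ 1 := by linarith [Real.log_two_lt_d9]
      have h5 := mul_le_mul_of_nonneg_right h4 hc2.le
      nlinarith

/-- Uniqueness of the zero of `N' T - N T'` for `T = S + L`, where `L x = m x + b` only needs to be
nonnegative on `[r, 1]`, to lie below `S`, and to have a nonnegative intercept. -/
lemma wronskian_zero_unique {c δ e m b r : ℝ} (hc : 1 < c) (hδ : 0 ≤ δ) (he : e < 0) (hr : 0 < r)
    (hN : ∀ x ∈ Set.Ioo r 1, 0 < entN e x) (hb : 0 ≤ b) (hL0 : ∀ x ∈ Set.Icc r 1, 0 ≤ m * x + b)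
    (hLS : ∀ x ∈ Set.Icc r 1, m * x + b ≤ rootS c δ x) {a a' : ℝ}
    (ha : a ∈ Set.Ioo r 1) (ha' : a' ∈ Set.Ioo r 1)
    (h0 : entN' e a * (rootS c δ a + (m * a + b)) - entN e a * (rootS' c δ a + m) = 0)
    (h0' : entN' e a' * (rootS c δ a' + (m * a' + b)) - entN e a' * (rootS' c δ a' + m) = 0) :
    a = a' := by
  let G : ℝ → ℝ := fun x =>
    entN' e x * (rootS c δ x + (m * x + b)) - entN e x * (rootS' c δ x + m)
  let G' : ℝ → ℝ := fun x => -(1 / x) * (rootS c δ x + (m * x + b))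
    - entN e x * (-(c * (1 + δ)) ^ 2 / (4 * rootS c δ x ^ 3))
  have hG : ∀ x ∈ Set.Ioo r 1, HasDerivAt G (G' x) x := by
    intro x hx
    have hx0 : 0 < x := hr.trans hx.1
    have hxc : x < c := hx.2.trans hc
    have hlin : HasDerivAt (fun y : ℝ => m * y + b) m x := by
      simpa using ((hasDerivAt_id x).const_mul m).add_const b
    have h := ((hasDerivAt_entN' e hx0.ne').mul ((hasDerivAt_rootS hδ hx0 hxc).add hlin)).sub
      ((hasDerivAt_entN e hx0.ne').mul ((hasDerivAt_rootS' hδ hx0 hxc).add_const m))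
    refine h.congr_deriv ?_
    simp only [G', Pi.add_apply]
    ring
  have hneg : ∀ x ∈ Set.Ioo r 1, G x = 0 → G' x < 0 := by
    intro x hx hGx
    have hx0 : 0 < x := hr.trans hx.1
    have hS := rootS_pos hδ hx0 (hx.2.trans hc)
    have hr1 : r ≤ 1 := (hx.1.trans hx.2).le
    have key := key_ineq hc hδ he hx0 hx.2 (hN x hx) hb (hL0 x ⟨hx.1.le, hx.2.le⟩)
      (hL0 1 ⟨hr1, le_rfl⟩) (hLS x ⟨hx.1.le, hx.2.le⟩) hGx
    have : G' x = (x * entN e x * (c * (1 + δ)) ^ 2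
        - 4 * rootS c δ x ^ 3 * (rootS c δ x + (m * x + b))) / (x * (4 * rootS c δ x ^ 3)) := by
      simp only [G']
      field_simp
      ring
    rw [this]
    exact div_neg_of_neg_of_pos (by linarith) (by positivity)
  rcases lt_trichotomy a a' with h | h | h
  · exact (unique_zero_of_deriv_neg hG hneg ha ha' h h0 h0').elim
  · exact h
  · exact (unique_zero_of_deriv_neg hG hneg ha' ha h h0' h0).elim

/-! ### The chord of `S` and the reduction of (E2) -/

/-- With `e = Δ0`, the strictly concave function `N` vanishes at `r` and `1`. -/
lemma entN_pos {r x : ℝ} (hr : 0 < r) (hx : x ∈ Set.Ioo r 1) :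
    0 < entN (r * Real.log r / (1 - r)) x := by
  have hr1 : 0 < 1 - r := by linarith [hx.1, hx.2]
  have h := Real.strictConvexOn_mul_log.2
  replace h := h (Set.mem_Ici.2 hr.le) (Set.mem_Ici.2 zero_le_one) (sub_pos.1 hr1).ne
    (show 0 < (1 - x) / (1 - r) from div_pos (by linarith [hx.2]) hr1)
    (show 0 < (x - r) / (1 - r) from div_pos (by linarith [hx.1]) hr1) (by field_simp; ring)
  have hcomb : ((1 - x) / (1 - r)) • r + ((x - r) / (1 - r)) • (1 : ℝ) = x := by
    simp only [smul_eq_mul]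
    field_simp
    ring
  rw [hcomb] at h
  simp only [smul_eq_mul, Real.log_one, mul_zero, add_zero] at h
  unfold entN
  have : r * Real.log r / (1 - r) * (1 - x) = (1 - x) / (1 - r) * (r * Real.log r) := by ring
  linarith

/-- The chord of `S` over `[r, 1]` lies below `S`, because the radicand is concave. -/
lemma chord_le {c δ r x : ℝ} (hc : 1 < c) (hδ : 0 ≤ δ) (hr : 0 < r) (hr1 : r < 1)
    (hx : x ∈ Set.Icc r 1) :
    ((x - r) * rootS c δ 1 + (1 - x) * rootS c δ r) / (1 - r) ≤ rootS c δ x := by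
  have h1 := rootS_sq hδ one_pos hc
  have h2 := rootS_sq hδ hr (hr1.trans hc)
  have hd : 0 < 1 - r := by linarith
  have hp : 0 ≤ (x - r) * (1 - x) := mul_nonneg (by linarith [hx.1]) (by linarith [hx.2])
  have hx1 : 0 ≤ 1 - x := by linarith [hx.2]
  have hxr : 0 ≤ x - r := by linarith [hx.1]
  rw [div_le_iff₀ hd]
  refine (abs_le_of_sq_le_sq' (b := rootS c δ x * (1 - r)) ?_
    (mul_nonneg (Real.sqrt_nonneg _) hd.le)).2
  have h3 := rootS_sq hδ (hr.trans_le hx.1) (lt_of_le_of_lt hx.2 hc)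
  rw [mul_pow, h3]
  -- Cauchy-Schwarz bounds the square of the chord by `(1 - r)` times the chord of the radicand,
  -- and the radicand exceeds its chord by `(x - r) (1 - x)`.
  calc ((x - r) * rootS c δ 1 + (1 - x) * rootS c δ r) ^ 2
      = (1 - r) * ((x - r) * rootS c δ 1 ^ 2 + (1 - x) * rootS c δ r ^ 2)
        - (x - r) * (1 - x) * (rootS c δ 1 - rootS c δ r) ^ 2 := by ring
    _ ≤ (1 - r) * ((x - r) * rootS c δ 1 ^ 2 + (1 - x) * rootS c δ r ^ 2) := by
        linarith [mul_nonneg hp (sq_nonneg (rootS c δ 1 - rootS c δ r))]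
    _ = (c - x) * (δ * c + x) * (1 - r) ^ 2 - (1 - r) ^ 2 * ((x - r) * (1 - x)) := by
        rw [h1, h2]; ring
    _ ≤ (c - x) * (δ * c + x) * (1 - r) ^ 2 := by
        linarith [mul_nonneg (sq_nonneg (1 - r)) hp]

/-- The chord has a nonnegative intercept at `0`. -/
lemma mul_rootS_one_le {c δ r : ℝ} (hc : 1 < c) (hδ : 0 ≤ δ) (hr : 0 < r) (hr1 : r < 1) :
    r * rootS c δ 1 ≤ rootS c δ r := by
  refine (abs_le_of_sq_le_sq' (b := rootS c δ r) ?_ (Real.sqrt_nonneg _)).2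
  rw [mul_pow, rootS_sq hδ one_pos hc, rootS_sq hδ hr (hr1.trans hc)]
  have hdc : 0 ≤ δ * c := mul_nonneg hδ (by linarith)
  have h1 : r ^ 2 * (δ * c + 1) ≤ δ * c + r := by
    have : r ^ 2 ≤ r := by nlinarith
    nlinarith
  calc r ^ 2 * ((c - 1) * (δ * c + 1)) = (c - 1) * (r ^ 2 * (δ * c + 1)) := by ring
    _ ≤ (c - 1) * (δ * c + r) := mul_le_mul_of_nonneg_left h1 (by linarith)
    _ ≤ (c - r) * (δ * c + r) := mul_le_mul_of_nonneg_right (by linarith) (by linarith)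

/-- Clearing denominators in (E2): with `L` the chord and `m` its slope, `Del1 = L / S`,
`Del2 = m / S`, and the equation reads `N' T = N T'`. -/
lemma wronskian_eq_zero_of_E2 {c δ r e a m b : ℝ} (hc : 1 < c) (hδ : 0 ≤ δ) (hr1 : r < 1)
    (ha0 : 0 < a) (ha1 : a < 1) (hN : 0 < entN e a)
    (hm : m = (rootS c δ 1 - rootS c δ r) / (1 - r))
    (hL : m * a + b = ((a - r) * rootS c δ 1 + (1 - a) * rootS c δ r) / (1 - r))
    (heq : (2 * (1 + Del1 c δ r a) / a) * (1 + (1 + e / a) / (Real.log a - e * (1 / a - 1)))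
            = 1 / (δ * c + a) - 1 / (c - a) + 2 * Del2 c δ r a) :
    entN' e a * (rootS c δ a + (m * a + b)) - entN e a * (rootS' c δ a + m) = 0 := by
  have hac : a < c := ha1.trans hc
  have hS := rootS_pos hδ ha0 hac
  have hsq := rootS_sq hδ ha0 hac
  have hd : 0 < 1 - r := by linarith
  have e1 : Del1 c δ r a = (m * a + b) / rootS c δ a := by
    rw [hL, div_div]; rfl
  have e2 : Del2 c δ r a = m / rootS c δ a := by
    rw [hm, div_div]; rfl
  have hdc : 0 < δ * c + a := by
    have := mul_nonneg hδ (zero_le_one.trans hc.le)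
    linarith
  have hca : 0 < c - a := by linarith
  have e3 : 1 / (δ * c + a) - 1 / (c - a) = 2 * rootS' c δ a / rootS c δ a := by
    have : 2 * rootS' c δ a / rootS c δ a = (c - δ * c - 2 * a) / rootS c δ a ^ 2 := by
      unfold rootS'; field_simp
    rw [this, hsq]
    field_simp
    ring
  have e4 : Real.log a - e * (1 / a - 1) = -(entN e a / a) := by
    unfold entN; field_simp; ring
  have e5 : 1 + (1 + e / a) / (Real.log a - e * (1 / a - 1)) = a * entN' e a / entN e a := by
    rw [e4]
    have : 1 + e / a = entN e a / a - entN' e a := by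
      unfold entN entN'; field_simp; ring
    rw [this]
    field_simp
    ring
  rw [e1, e2, e3, e5] at heq
  field_simp at heq
  linarith

/-- Uniqueness of the root of equation (E2) in `(r, 1)`. -/
theorem E2_root_unique
    (p0 p1 p2 xL xU c δ r Δ0 : ℝ)
    (hp0 : p0 ∈ Set.Ioo (0 : ℝ) 1)
    (hp1 : p1 ∈ Set.Ioc (1 / 2 : ℝ) 1) (hp2 : p2 ∈ Set.Ioc (1 / 2 : ℝ) 1)
    (hxL : 1 ≤ xL) (hxLU : xL < xU)
    (hc : c = p1 / ((p1 + p2 - 1) * (1 - p0) ^ xL))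
    (hδ : δ = (1 - p1) / p1)
    (hr : r = (1 - p0) ^ (xU - xL))
    (hΔ0 : Δ0 = r * Real.log r / (1 - r))
    (a a' : ℝ) (ha : a ∈ Set.Ioo r 1) (ha' : a' ∈ Set.Ioo r 1)
    (hne : Real.log a - Δ0 * (1 / a - 1) ≠ 0)
    (hne' : Real.log a' - Δ0 * (1 / a' - 1) ≠ 0)
    (heq : (2 * (1 + Del1 c δ r a) / a) * (1 + (1 + Δ0 / a) / (Real.log a - Δ0 * (1 / a - 1)))
            = 1 / (δ * c + a) - 1 / (c - a) + 2 * Del2 c δ r a)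
    (heq' : (2 * (1 + Del1 c δ r a') / a')
              * (1 + (1 + Δ0 / a') / (Real.log a' - Δ0 * (1 / a' - 1)))
            = 1 / (δ * c + a') - 1 / (c - a') + 2 * Del2 c δ r a') :
    a = a' := by
  have hp0' : 0 < 1 - p0 := by linarith [hp0.2]
  have hp0'' : 1 - p0 < 1 := by linarith [hp0.1]
  have hq : (1 - p0) ^ xL < 1 := Real.rpow_lt_one hp0'.le hp0'' (by linarith)
  have hq0 : 0 < (1 - p0) ^ xL := Real.rpow_pos_of_pos hp0' _
  have hr0 : 0 < r := by rw [hr]; exact Real.rpow_pos_of_pos hp0' _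
  have hr1 : r < 1 := ha.1.trans ha.2
  have hp1' : 1 / 2 < p1 := hp1.1
  have hp2' : 1 / 2 < p2 := hp2.1
  have hδ0 : 0 ≤ δ := by
    rw [hδ]; exact div_nonneg (by linarith [hp1.2]) (by linarith)
  have hc1 : 1 < c := by
    rw [hc, lt_div_iff₀ (mul_pos (by linarith) hq0)]
    have := mul_lt_mul_of_pos_left hq (show 0 < p1 + p2 - 1 by linarith)
    linarith [hp2.2]
  have hd : 0 < 1 - r := by linarith
  have he : Δ0 < 0 := by
    rw [hΔ0]
    exact div_neg_of_neg_of_pos (mul_neg_of_pos_of_neg hr0 (Real.log_neg hr0 hr1)) hd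
  have hN : ∀ x ∈ Set.Ioo r 1, 0 < entN Δ0 x := fun x hx => hΔ0 ▸ entN_pos hr0 hx
  have hS1 := rootS_pos hδ0 one_pos hc1
  have hSr := rootS_pos hδ0 hr0 (hr1.trans hc1)
  obtain ⟨m, hm⟩ : ∃ m, m = (rootS c δ 1 - rootS c δ r) / (1 - r) := ⟨_, rfl⟩
  obtain ⟨b, hb⟩ : ∃ b, b = (rootS c δ r - r * rootS c δ 1) / (1 - r) := ⟨_, rfl⟩
  have hL : ∀ x, m * x + b = ((x - r) * rootS c δ 1 + (1 - x) * rootS c δ r) / (1 - r) := by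
    intro x; rw [hm, hb]; ring
  have hb0 : 0 ≤ b := hb ▸ div_nonneg (sub_nonneg.2 (mul_rootS_one_le hc1 hδ0 hr0 hr1)) hd.le
  refine wronskian_zero_unique hc1 hδ0 he hr0 hN hb0 ?_ ?_ ha ha'
    (wronskian_eq_zero_of_E2 hc1 hδ0 hr1 (hr0.trans ha.1) ha.2 (hN a ha) hm (hL a) heq)
    (wronskian_eq_zero_of_E2 hc1 hδ0 hr1 (hr0.trans ha'.1) ha'.2 (hN a' ha') hm (hL a') heq')
  · intro x hx
    rw [hL]
    exact div_nonneg (add_nonneg (mul_nonneg (by linarith [hx.1]) hS1.le)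
      (mul_nonneg (by linarith [hx.2]) hSr.le)) hd.le
  · intro x hx
    rw [hL]
    exact chord_le hc1 hδ0 hr0 hr1 hx
end

section
/- Fix group sizes x1 < x2 < x3 with x1 ≥ 1 and weights w1, w2, w3 > 0 summing to 1, and let ξ be the corresponding design. Let M_f be the 3×3 matrix with columns f(x1), f(x2), f(x3). Then M(ξ) = M_f · diag(w1λ(x1), w2λ(x2), w3λ(x3)) · M_f^T is invertible and the (1,1) entry of M(ξ)^{−1} equals det(M_f)^{−2} · Σ_{i=1}^3 Q_i(x1,x2,x3)/w_i. -/
/-!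
Write `q = 1 - p0` and `yᵢ = q ^ xᵢ`. Since `Mf` has columns `f(xᵢ)`, the factorisation of `M` is a
direct expansion, and `det M = (det Mf)² · ∏ wᵢ λ(xᵢ)`.

Two facts make `M` invertible. Each `λ(xᵢ)` is positive, because `π` and `1 - π` are convex
combinations, with weights `1 - yᵢ` and `yᵢ` in `(0, 1)`, of nonnegative numbers of which at least
one is positive (`gtLam_pos`). And `det Mf ≠ 0`: up to a nonzero factor it is the determinant with
rows `(xᵢ yᵢ, 1, yᵢ)`, and `xᵢ yᵢ = (yᵢ log yᵢ) / log q`, so its vanishing would put three points of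
the graph of the strictly convex function `y ↦ y log y` on one line (`collinear_det_ne_zero`).

By Cramer's rule the entry `(M⁻¹)₀₀` is the lower-right `2 × 2` minor of `M` over `det M`. By
Cauchy–Binet this minor is `∑_{i<j} cᵢ cⱼ (yᵢ - yⱼ)²` with `cᵢ = wᵢ λ(xᵢ)`, the minor of
`Mf` on the last two rows and columns `i, j` being `± (yᵢ - yⱼ)`. Dividing by `c₁ c₂ c₃`
leaves `∑ Qᵢ / wᵢ`.
-/

open Real Matrix

/-- Probability of a positive response at group size `x`. -/
noncomputable def gtPi (p0 p1 p2 x : ℝ) : ℝ := p1 - (p1 + p2 - 1) * (1 - p0) ^ x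

/-- `λ(x) = 1/(π(x)(1 − π(x)))`. -/
noncomputable def gtLam (p0 p1 p2 x : ℝ) : ℝ :=
  1 / (gtPi p0 p1 p2 x * (1 - gtPi p0 p1 p2 x))

/-- Gradient vector `f(x)`. -/
noncomputable def gtF (p0 p1 p2 x : ℝ) : Fin 3 → ℝ :=
  ![x * (p1 + p2 - 1) * (1 - p0) ^ (x - 1), 1 - (1 - p0) ^ x, -(1 - p0) ^ x]

/-- Contribution `w · λ(x) · f(x) f(x)ᵀ` of a single group size to the information matrix. -/
noncomputable def gtAtom (p0 p1 p2 w x : ℝ) : Matrix (Fin 3) (Fin 3) ℝ :=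
  (w * gtLam p0 p1 p2 x) • vecMulVec (gtF p0 p1 p2 x) (gtF p0 p1 p2 x)

lemma gtLam_pos {p0 p1 p2 x : ℝ} (hp0 : p0 ∈ Set.Ioo (0 : ℝ) 1)
    (hp1 : p1 ∈ Set.Ioc (1 / 2 : ℝ) 1) (hp2 : p2 ∈ Set.Ioc (1 / 2 : ℝ) 1) (hx : 0 < x) :
    0 < gtLam p0 p1 p2 x := by
  obtain ⟨h0, h0'⟩ := hp0
  obtain ⟨h1, h1'⟩ := hp1
  obtain ⟨h2, h2'⟩ := hp2
  have hy : 0 < (1 - p0) ^ x := Real.rpow_pos_of_pos (by linarith) x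
  have hy1 : (1 - p0) ^ x < 1 := Real.rpow_lt_one (by linarith) (by linarith) hx
  unfold gtLam gtPi
  set y := (1 - p0) ^ x
  have hpi : 0 < p1 - (p1 + p2 - 1) * y := by
    have e1 : 0 < p1 * (1 - y) := mul_pos (by linarith) (by linarith)
    have e2 : 0 ≤ (1 - p2) * y := mul_nonneg (by linarith) hy.le
    linarith
  have hpi' : 0 < 1 - (p1 - (p1 + p2 - 1) * y) := by
    have e1 : 0 ≤ (1 - p1) * (1 - y) := mul_nonneg (by linarith) (by linarith)
    have e2 : 0 < p2 * y := mul_pos (by linarith) hy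
    linarith
  positivity

/-- The points `(q ^ xᵢ, xᵢ q ^ xᵢ)` are not collinear, by strict convexity of `y ↦ y log y`;
this is expressed as nonvanishing of the determinant that detects collinearity. -/
lemma collinear_det_ne_zero {q x1 x2 x3 : ℝ} (hq : 0 < q) (hq1 : q < 1)
    (h12 : x1 < x2) (h23 : x2 < x3) :
    x1 * q ^ x1 * (q ^ x2 - q ^ x3) - x2 * q ^ x2 * (q ^ x1 - q ^ x3)
      + x3 * q ^ x3 * (q ^ x1 - q ^ x2) ≠ 0 := by
  have l1 := Real.log_rpow hq x1
  have l2 := Real.log_rpow hq x2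
  have l3 := Real.log_rpow hq x3
  have y3 : 0 < q ^ x3 := Real.rpow_pos_of_pos hq x3
  have y12 : q ^ x2 < q ^ x1 := Real.rpow_lt_rpow_of_exponent_gt hq hq1 h12
  have y23 : q ^ x3 < q ^ x2 := Real.rpow_lt_rpow_of_exponent_gt hq hq1 h23
  have h := Real.strictConvexOn_mul_log.slope_strict_mono_adjacent
    (Set.mem_Ici.2 y3.le) (Set.mem_Ici.2 (by linarith : (0 : ℝ) ≤ q ^ x1)) y23 y12
  rw [l1, l2, l3, div_lt_div_iff₀ (by linarith) (by linarith)] at h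
  intro h0
  -- multiplying by `log q` turns each `xᵢ q ^ xᵢ` into `y log y` at `y = q ^ xᵢ`
  have := congrArg (fun t => Real.log q * t) h0
  simp only [mul_zero] at this
  linarith

/-- For a three-point design, `M(ξ) = M_f · diag(wᵢ λ(xᵢ)) · M_fᵀ` is invertible and the
`(1,1)` entry of `M(ξ)⁻¹` equals `det(M_f)⁻² · Σᵢ Qᵢ/wᵢ`. -/
theorem info_inverse_entry
    (p0 p1 p2 x1 x2 x3 w1 w2 w3 Q1 Q2 Q3 : ℝ)
    (hp0 : p0 ∈ Set.Ioo (0 : ℝ) 1)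
    (hp1 : p1 ∈ Set.Ioc (1 / 2 : ℝ) 1) (hp2 : p2 ∈ Set.Ioc (1 / 2 : ℝ) 1)
    (hx1 : 1 ≤ x1) (h12 : x1 < x2) (h23 : x2 < x3)
    (hw1 : 0 < w1) (hw2 : 0 < w2) (hw3 : 0 < w3) (hw : w1 + w2 + w3 = 1)
    (hQ1 : Q1 = (gtLam p0 p1 p2 x1)⁻¹ * ((1 - p0) ^ x2 - (1 - p0) ^ x3) ^ 2)
    (hQ2 : Q2 = (gtLam p0 p1 p2 x2)⁻¹ * ((1 - p0) ^ x1 - (1 - p0) ^ x3) ^ 2)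
    (hQ3 : Q3 = (gtLam p0 p1 p2 x3)⁻¹ * ((1 - p0) ^ x1 - (1 - p0) ^ x2) ^ 2)
    (Mf M : Matrix (Fin 3) (Fin 3) ℝ)
    (hMf : Mf = (Matrix.of ![gtF p0 p1 p2 x1, gtF p0 p1 p2 x2, gtF p0 p1 p2 x3])ᵀ)
    (hM : M = gtAtom p0 p1 p2 w1 x1 + gtAtom p0 p1 p2 w2 x2 + gtAtom p0 p1 p2 w3 x3) :
    M = Mf * Matrix.diagonal ![w1 * gtLam p0 p1 p2 x1, w2 * gtLam p0 p1 p2 x2,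
          w3 * gtLam p0 p1 p2 x3] * Mfᵀ ∧
    IsUnit M.det ∧
    M⁻¹ 0 0 = (Q1 / w1 + Q2 / w2 + Q3 / w3) / Mf.det ^ 2 := by
  have hq : 0 < 1 - p0 := by linarith [hp0.2]
  have L1 := gtLam_pos hp0 hp1 hp2 (by linarith : 0 < x1)
  have L2 := gtLam_pos hp0 hp1 hp2 (by linarith : 0 < x2)
  have L3 := gtLam_pos hp0 hp1 hp2 (by linarith : 0 < x3)
  have hD := collinear_det_ne_zero hq (by linarith [hp0.1]) h12 h23
  have hs : 0 < p1 + p2 - 1 := by linarith [hp1.1, hp2.1]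
  have hfac : M = Mf * Matrix.diagonal ![w1 * gtLam p0 p1 p2 x1, w2 * gtLam p0 p1 p2 x2,
      w3 * gtLam p0 p1 p2 x3] * Mfᵀ := by
    subst hM hMf
    ext i j
    simp [gtAtom, Matrix.mul_apply, Fin.sum_univ_three, Matrix.vecMulVec_apply,
      Matrix.diagonal_apply]
    ring
  have hMfdet : Mf.det ≠ 0 := by
    have e : Mf.det = (p1 + p2 - 1) / (1 - p0) *
        (x1 * (1 - p0) ^ x1 * ((1 - p0) ^ x2 - (1 - p0) ^ x3)
          - x2 * (1 - p0) ^ x2 * ((1 - p0) ^ x1 - (1 - p0) ^ x3)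
          + x3 * (1 - p0) ^ x3 * ((1 - p0) ^ x1 - (1 - p0) ^ x2)) := by
      subst hMf
      simp [Matrix.det_fin_three, gtF, Real.rpow_sub_one hq.ne']
      ring
    rw [e]
    exact mul_ne_zero (div_ne_zero hs.ne' hq.ne') hD
  have hMdet : M.det = Mf.det ^ 2 * ((w1 * gtLam p0 p1 p2 x1) * (w2 * gtLam p0 p1 p2 x2) *
      (w3 * gtLam p0 p1 p2 x3)) := by
    rw [hfac, Matrix.det_mul, Matrix.det_mul, Matrix.det_transpose, Matrix.det_diagonal]
    simp [Fin.prod_univ_three]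
    ring
  have hMne : M.det ≠ 0 := by rw [hMdet]; positivity
  refine ⟨hfac, isUnit_iff_ne_zero.2 hMne, ?_⟩
  have hadj : M.adjugate 0 0 =
      (w1 * gtLam p0 p1 p2 x1) * (w2 * gtLam p0 p1 p2 x2) *
          ((1 - p0) ^ x1 - (1 - p0) ^ x2) ^ 2
        + (w1 * gtLam p0 p1 p2 x1) * (w3 * gtLam p0 p1 p2 x3) *
          ((1 - p0) ^ x1 - (1 - p0) ^ x3) ^ 2
        + (w2 * gtLam p0 p1 p2 x2) * (w3 * gtLam p0 p1 p2 x3) *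
          ((1 - p0) ^ x2 - (1 - p0) ^ x3) ^ 2 := by
    subst hM
    simp [Matrix.adjugate_fin_three, gtAtom, gtF]
    ring
  rw [Matrix.inv_def, Matrix.smul_apply, hadj, hMdet, Ring.inverse_eq_inv', smul_eq_mul,
    hQ1, hQ2, hQ3]
  field_simp
  ring
end

section
/- Fix group sizes x1 < x2 < x3 with x1 ≥ 1 and let M_f be the 3×3 matrix with columns f(x1), f(x2), f(x3). Then det(M_f) ≠ 0 and M_f · v = det(M_f) · e1, where v = (q^{x2} − q^{x3}, q^{x3} − q^{x1}, q^{x1} − q^{x2})^T and e1 = (1,0,0)^T; equivalently, M_f^{−1} e1 = det(M_f)^{−1} v. -/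
/-!
Write `q = 1 - p0`, `c = p1 + p2 - 1 > 0` and `u x = q ^ (-x)`. The vector `v` is the first row of
cofactors of `M_f`, so `M_f v = det(M_f) e₁` is polynomial algebra once the powers of `q` are treated
as indeterminates. Expanding along the first row and using `x q ^ (x - 1) = q⁻¹ x q ^ x` gives
`det(M_f) = c q⁻¹ q ^ (x₁ + x₂ + x₃) * ((x₃ - x₁) u x₂ - (x₃ - x₂) u x₁ - (x₂ - x₁) u x₃)`,
and the last factor is negative because `u` is strictly convex (`rpow_cofactor_sum_neg`).
-/

open Real Matrix

/-- Up to the positive factor `c / q`, the expression on the left is the determinant of `M_f`. -/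
lemma rpow_cofactor_sum_neg {q x1 x2 x3 : ℝ} (hq0 : 0 < q) (hq1 : q < 1)
    (h12 : x1 < x2) (h23 : x2 < x3) :
    x1 * q ^ x1 * (q ^ x2 - q ^ x3) + x2 * q ^ x2 * (q ^ x3 - q ^ x1)
      + x3 * q ^ x3 * (q ^ x1 - q ^ x2) < 0 := by
  have hL : 0 < -Real.log q := neg_pos.mpr (Real.log_neg hq0 hq1)
  have hu (x : ℝ) : Real.exp (-Real.log q * x) = (q ^ x)⁻¹ := by
    rw [Real.rpow_def_of_pos hq0, ← Real.exp_neg, neg_mul]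
  -- Strict convexity of `exp`, at the points `-log q * xᵢ`, as a comparison of adjacent slopes.
  have hconv := strictConvexOn_exp.slope_strict_mono_adjacent
    (Set.mem_univ (-Real.log q * x1)) (Set.mem_univ (-Real.log q * x3))
    (mul_lt_mul_of_pos_left h12 hL) (mul_lt_mul_of_pos_left h23 hL)
  rw [hu, hu, hu, ← mul_sub, ← mul_sub,
    div_lt_div_iff₀ (mul_pos hL (sub_pos.mpr h12)) (mul_pos hL (sub_pos.mpr h23))] at hconv
  have hslope : ((q ^ x2)⁻¹ - (q ^ x1)⁻¹) * (x3 - x2) < ((q ^ x3)⁻¹ - (q ^ x2)⁻¹) * (x2 - x1) := by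
    refine lt_of_mul_lt_mul_left ?_ hL.le
    linarith
  have h1 : 0 < q ^ x1 := Real.rpow_pos_of_pos hq0 _
  have h2 : 0 < q ^ x2 := Real.rpow_pos_of_pos hq0 _
  have h3 : 0 < q ^ x3 := Real.rpow_pos_of_pos hq0 _
  have hfac : x1 * q ^ x1 * (q ^ x2 - q ^ x3) + x2 * q ^ x2 * (q ^ x3 - q ^ x1)
      + x3 * q ^ x3 * (q ^ x1 - q ^ x2)
      = q ^ x1 * q ^ x2 * q ^ x3 * (((q ^ x2)⁻¹ - (q ^ x1)⁻¹) * (x3 - x2)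
        - ((q ^ x3)⁻¹ - (q ^ x2)⁻¹) * (x2 - x1)) := by
    field_simp
    ring
  rw [hfac]
  exact mul_neg_of_pos_of_neg (by positivity) (sub_neg.mpr hslope)

/-- For `x₁ < x₂ < x₃`, the matrix `M_f` with columns `f(xᵢ)` has nonzero determinant and
`M_f v = det(M_f) e₁` for `v = (q^{x₂} − q^{x₃}, q^{x₃} − q^{x₁}, q^{x₁} − q^{x₂})ᵀ`;
equivalently `M_f⁻¹ e₁ = det(M_f)⁻¹ v`. -/
theorem Mf_inv_e1
    (p0 p1 p2 x1 x2 x3 : ℝ)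
    (hp0 : p0 ∈ Set.Ioo (0 : ℝ) 1)
    (hp1 : p1 ∈ Set.Ioc (1 / 2 : ℝ) 1) (hp2 : p2 ∈ Set.Ioc (1 / 2 : ℝ) 1)
    (hx1 : 1 ≤ x1) (h12 : x1 < x2) (h23 : x2 < x3)
    (Mf : Matrix (Fin 3) (Fin 3) ℝ)
    (hMf : Mf = (Matrix.of ![gtF p0 p1 p2 x1, gtF p0 p1 p2 x2, gtF p0 p1 p2 x3])ᵀ)
    (v : Fin 3 → ℝ)
    (hv : v = ![(1 - p0) ^ x2 - (1 - p0) ^ x3, (1 - p0) ^ x3 - (1 - p0) ^ x1,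
                (1 - p0) ^ x1 - (1 - p0) ^ x2]) :
    Mf.det ≠ 0 ∧ Mf.mulVec v = Mf.det • ![1, 0, 0] ∧
    Mf⁻¹.mulVec ![1, 0, 0] = Mf.det⁻¹ • v := by
  have hq0 : 0 < 1 - p0 := sub_pos.mpr hp0.2
  have hq1 : 1 - p0 < 1 := sub_lt_self 1 hp0.1
  have hc : 0 < p1 + p2 - 1 := by linarith [hp1.1, hp2.1]
  have hdet : Mf.det = (p1 + p2 - 1) / (1 - p0) *
      (x1 * (1 - p0) ^ x1 * ((1 - p0) ^ x2 - (1 - p0) ^ x3)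
        + x2 * (1 - p0) ^ x2 * ((1 - p0) ^ x3 - (1 - p0) ^ x1)
        + x3 * (1 - p0) ^ x3 * ((1 - p0) ^ x1 - (1 - p0) ^ x2)) := by
    rw [hMf, Matrix.det_fin_three]
    simp [gtF, Real.rpow_sub_one hq0.ne']
    ring
  have hne : Mf.det ≠ 0 := by
    rw [hdet]
    exact (mul_neg_of_pos_of_neg (div_pos hc hq0)
      (rpow_cofactor_sum_neg hq0 hq1 h12 h23)).ne
  have hmul : Mf.mulVec v = Mf.det • ![1, 0, 0] := by
    rw [hdet, hMf, hv]
    ext i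
    fin_cases i <;>
      simp [gtF, Matrix.mulVec, dotProduct, Fin.sum_univ_three, Real.rpow_sub_one hq0.ne'] <;>
      ring
  refine ⟨hne, hmul, ?_⟩
  -- Apply `Mf⁻¹` to `hmul` and divide by the determinant.
  have hv' : v = Mf.det • Mf⁻¹.mulVec ![1, 0, 0] := by
    rw [← Matrix.mulVec_smul, ← hmul, Matrix.mulVec_mulVec,
      Matrix.nonsing_inv_mul _ hne.isUnit, Matrix.one_mulVec]
  rw [eq_inv_smul_iff₀ hne]
  exact hv'.symm
end

section
/- For any two group sizes x1 < x2 (with x1 ≥ 1), the determinant of the 3×3 matrix whose columns are f(x1), f(x2), and e1 = (1,0,0)^T equals q^{x1} − q^{x2}, which is strictly positive. -/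
open Real Matrix

/-- For `x₁ < x₂` (with `x₁ ≥ 1`), the determinant of the matrix with columns
`f(x₁), f(x₂), e₁` equals `q^{x₁} − q^{x₂} > 0`. -/
theorem det_f_f_e1
    (p0 p1 p2 x1 x2 : ℝ)
    (hp0 : p0 ∈ Set.Ioo (0 : ℝ) 1)
    (hp1 : p1 ∈ Set.Ioc (1 / 2 : ℝ) 1) (hp2 : p2 ∈ Set.Ioc (1 / 2 : ℝ) 1)
    (hx1 : 1 ≤ x1) (h12 : x1 < x2)
    (A : Matrix (Fin 3) (Fin 3) ℝ)
    (hA : A = (Matrix.of ![gtF p0 p1 p2 x1, gtF p0 p1 p2 x2, ![1, 0, 0]])ᵀ) :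
    A.det = (1 - p0) ^ x1 - (1 - p0) ^ x2 ∧ 0 < (1 - p0) ^ x1 - (1 - p0) ^ x2 := by
  have hq0 : 0 < 1 - p0 := by linarith [hp0.2]
  have hq1 : 1 - p0 < 1 := by linarith [hp0.1]
  refine ⟨?_, sub_pos.mpr (Real.rpow_lt_rpow_of_exponent_gt hq0 hq1 h12)⟩
  -- Along the column `e₁` only the minor of rows 2, 3 survives:
  -- `-(1 - q^x₁) q^x₂ + (1 - q^x₂) q^x₁ = q^x₁ - q^x₂`.
  subst hA
  simp [Matrix.det_fin_three, gtF]
  ring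
end

section
/- For any two distinct group sizes x1 ≠ x2 (both ≥ 1), the vector e1 = (1,0,0)^T does not lie in the linear span of f(x1) and f(x2) in ℝ³. (Consequently, the prevalence p0 is not estimable under any design with only two distinct group sizes.) -/
/-!
Suppose `a f(x₁) + b f(x₂) = e₁`. The last two coordinates of each `f(x)` differ by
`(1 - q ^ x) - (-q ^ x) = 1` and those of `e₁` agree, so `a + b = 0`; the last coordinate then gives `a (q ^ x₁ - q ^ x₂) = 0`. As `x ↦ q ^ x` is injective for
`0 < q < 1`, both coefficients vanish, contradicting the first coordinate.
-/

open Real Matrix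

/-- For distinct group sizes `x₁ ≠ x₂` (both `≥ 1`), the vector `e₁ = (1,0,0)ᵀ` does not lie
in the span of `f(x₁)` and `f(x₂)`; hence the prevalence is not estimable from two sizes. -/
theorem e1_not_in_span
    (p0 p1 p2 x1 x2 : ℝ)
    (hp0 : p0 ∈ Set.Ioo (0 : ℝ) 1)
    (hp1 : p1 ∈ Set.Ioc (1 / 2 : ℝ) 1) (hp2 : p2 ∈ Set.Ioc (1 / 2 : ℝ) 1)
    (hx1 : 1 ≤ x1) (hx2 : 1 ≤ x2) (hne : x1 ≠ x2) :
    (![1, 0, 0] : Fin 3 → ℝ) ∉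
      Submodule.span ℝ ({gtF p0 p1 p2 x1, gtF p0 p1 p2 x2} : Set (Fin 3 → ℝ)) := by
  obtain ⟨hp, hp'⟩ := hp0
  -- Since `0 < q < 1`, the map `x ↦ q ^ x` is injective.
  have hq : (1 - p0) ^ x1 ≠ (1 - p0) ^ x2 := fun h =>
    hne ((Real.rpow_right_inj (by linarith) (by linarith)).1 h)
  rw [Submodule.mem_span_pair]
  rintro ⟨a, b, h⟩
  have h0 := congrFun h 0
  have h1 := congrFun h 1
  have h2 := congrFun h 2
  simp [gtF] at h0 h1 h2
  -- Index 1 minus index 2 is `a + b = 0`, so the equation at index 2 becomes `a (q ^ x₁ - q ^ x₂) = 0`.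
  have hb : b = -a := by linarith
  subst hb
  have ha : a * ((1 - p0) ^ x1 - (1 - p0) ^ x2) = 0 := by linarith
  rcases mul_eq_zero.1 ha with ha | ha
  · simp [ha] at h0
  · exact hq (sub_eq_zero.1 ha)
end

section
/- For all real numbers a3, a2 with 0 < a3 < a2 < 1: a3(1 − a2)·log(a3) − a2(1 − a3)·log(a2) > 0. -/
/-- Inequality (iii): for `0 < a₃ < a₂ < 1`,
`a₃(1 − a₂) log a₃ − a₂(1 − a₃) log a₂ > 0`. -/
theorem ineq_iii (a3 a2 : ℝ) (h0 : 0 < a3) (h32 : a3 < a2) (h21 : a2 < 1) :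
    0 < a3 * (1 - a2) * Real.log a3 - a2 * (1 - a3) * Real.log a2 := by
  -- `x ↦ x log x` is strictly convex and vanishes at `1`, so its secant slopes from `1` are
  -- strictly increasing: `a₃ log a₃ / (a₃ − 1) < a₂ log a₂ / (a₂ − 1)`.
  have h := Real.strictConvexOn_mul_log.secant_strict_mono (a := 1) (x := a3) (y := a2)
    (by simp) h0.le (h0.trans h32).le (h32.trans h21).ne h21.ne h32
  simp only [Real.log_one, mul_zero, sub_zero] at h
  rw [← neg_sub 1 a3, ← neg_sub 1 a2, div_neg, div_neg, neg_lt_neg_iff,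
    div_lt_div_iff₀ (by linarith) (by linarith)] at h
  linarith
end

section
/- For all real numbers a3, a2 with 0 < a3 < a2 < 1: (1 − a3)·(a2·log(a2) + a3(1 − a2)) − (1 − a2)·(−log(a3) + (1 − a3)·a3) < 0. Equivalently, (1 − a3²)·(1 − a2 + a2·log(a2) + (1 − a2)·log(a3)) + a3·(a3(1−a2)log(a3) − a2(1−a3)log(a2)) < 0. -/
open Real

/-- Inequality (iv): for `0 < a₃ < a₂ < 1`,
`(1 − a₃)(a₂ log a₂ + a₃(1 − a₂)) − (1 − a₂)(−log a₃ + (1 − a₃)a₃) < 0`, equivalently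
`(1 − a₃²)·∂|Γ₁|/∂a₃ + a₃·|Γ₁| < 0`. -/
theorem ineq_iv (a3 a2 : ℝ) (h0 : 0 < a3) (h32 : a3 < a2) (h21 : a2 < 1) :
    (1 - a3) * (a2 * Real.log a2 + a3 * (1 - a2))
      - (1 - a2) * (-Real.log a3 + (1 - a3) * a3) < 0 ∧
    (1 - a3 ^ 2) * (1 - a2 + a2 * Real.log a2 + (1 - a2) * Real.log a3)
      + a3 * (a3 * (1 - a2) * Real.log a3 - a2 * (1 - a3) * Real.log a2) < 0 := by
  have h2 : 0 < a2 := h0.trans h32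
  have h31 : a3 < 1 := h32.trans h21
  constructor
  · -- The logarithm-free terms cancel, and both logarithms are negative.
    have e2 : (1 - a3) * a2 * -log a2 > 0 :=
      mul_pos (mul_pos (by linarith) h2) (neg_pos.2 (log_neg h2 h21))
    have e3 : (1 - a2) * -log a3 > 0 :=
      mul_pos (by linarith) (neg_pos.2 (log_neg h0 h31))
    linarith
  · -- Convexity of `x log x`, which vanishes at `1`, bounds its value at `a2 ∈ (a3, 1)` by the
    -- chord from `a3` to `1`.
    have hc : (1 - a3) * (a2 * log a2) ≤ (1 - a2) * (a3 * log a3) := by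
      have hd : 0 < 1 - a3 := by linarith
      have h := convexOn_mul_log.2 (Set.mem_Ici.2 h0.le) (Set.mem_Ici.2 zero_le_one)
        (div_nonneg (by linarith) hd.le : 0 ≤ (1 - a2) / (1 - a3))
        (div_nonneg (by linarith) hd.le : 0 ≤ (a2 - a3) / (1 - a3))
        (by field_simp; ring)
      have e : (1 - a2) / (1 - a3) * a3 + (a2 - a3) / (1 - a3) * 1 = a2 := by
        field_simp; ring
      simp only [smul_eq_mul, e, log_one, mul_zero, add_zero] at h
      calc (1 - a3) * (a2 * log a2)
          ≤ (1 - a3) * ((1 - a2) / (1 - a3) * (a3 * log a3)) :=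
            mul_le_mul_of_nonneg_left h hd.le
        _ = (1 - a2) * (a3 * log a3) := by field_simp
    -- With that bound the left side is at most `(1 - a2) (1 + a3) (1 - a3 + log a3)`.
    have hl : 0 < (1 - a2) * (1 + a3) * (a3 - 1 - log a3) :=
      mul_pos (mul_pos (by linarith) (by linarith))
        (by linarith [log_lt_sub_one_of_pos h0 h31.ne])
    linarith
end

section
/- Let c > 1, δ ∈ [0,1), and 0 < a3 < a2 < 1 be real numbers. Set G = a3(1 − a2)·log(a3) − a2(1 − a3)·log(a2) and D = 1 − a2 + a2·log(a2) + (1 − a2)·log(a3). Then G > 0 and 2D/G + 1/(c − a3) − 1/(δc + a3) < 0. (Hence the D-criterion log|Γ1|²|Γ2| is strictly decreasing in a3, so the D-optimal design places a support point at the largest allowable group size x_U.) -/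
open Real

/-!
Write `x = a₃`, `y = a₂`. Positivity of `G` says `y (1 - x) log y < x (1 - y) log x`, which is strict
convexity of `t log t` at the point `y` between `x` and `1` (where `t log t` vanishes).

The rational part `1/(c - x) - 1/(δc + x)` is at most its value `2x/(1 - x²)` at the extreme
parameters `δ = 1`, `c = 1`. It remains to show `(1 - x²) D + x G < 0`. The left side simplifies to
`(1 - x²)(1 - y) + (1 - y) log x + y (1 - x) log y`; by positivity of `G` it is less than
`(1 - y)(1 + x)(1 - x + log x)`, which is negative because `log x < x - 1`.
-/

/-- Strict convexity of `t log t` on the segment from `x` to `1`, where it vanishes at `1`. -/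
lemma mul_log_chord {x y : ℝ} (h0 : 0 < x) (hxy : x < y) (hy : y < 1) :
    y * (1 - x) * log y < x * (1 - y) * log x := by
  have hx : 0 < 1 - x := by linarith
  have h := Real.strictConvexOn_mul_log.2 (Set.mem_Ici.2 h0.le)
    (Set.mem_Ici.2 (zero_le_one' ℝ)) (by linarith : x ≠ 1)
    (div_pos (sub_pos.2 hy) hx) (div_pos (sub_pos.2 hxy) hx) (by field_simp; ring)
  have e : (1 - y) / (1 - x) * x + (y - x) / (1 - x) * 1 = y := by field_simp; ring
  simp only [smul_eq_mul, e, log_one, mul_zero, add_zero] at h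
  have h' := mul_lt_mul_of_pos_right h hx
  have e' : (1 - y) / (1 - x) * (x * log x) * (1 - x) = x * (1 - y) * log x := by
    field_simp
  linarith

/-- The rational part is largest in the limit `δ → 1`, `c → 1`. -/
lemma rational_part_le {c δ x : ℝ} (hc : 1 < c) (hδ0 : 0 ≤ δ) (hδ1 : δ < 1)
    (h0 : 0 < x) (h1 : x < 1) :
    1 / (c - x) - 1 / (δ * c + x) ≤ 2 * x / (1 - x ^ 2) := by
  have hd : 1 / (c + x) ≤ 1 / (δ * c + x) :=
    one_div_le_one_div_of_le (by positivity) (by nlinarith)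
  have hcx : 0 < c - x := by linarith
  have hcx' : 0 < c + x := by linarith
  have e : 1 / (c - x) - 1 / (c + x) = 2 * x / (c ^ 2 - x ^ 2) := by
    rw [sq_sub_sq]
    field_simp
    ring
  have hle : 2 * x / (c ^ 2 - x ^ 2) ≤ 2 * x / (1 - x ^ 2) :=
    div_le_div_of_nonneg_left (by linarith) (by nlinarith) (by nlinarith)
  linarith

/-- The D-criterion is strictly decreasing in `a₃`: with
`G = a₃(1 − a₂) log a₃ − a₂(1 − a₃) log a₂` and
`D = 1 − a₂ + a₂ log a₂ + (1 − a₂) log a₃`, one has `G > 0` and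
`2D/G + 1/(c − a₃) − 1/(δc + a₃) < 0`. -/
theorem D_criterion_decreasing
    (c δ a3 a2 G D : ℝ) (hc : 1 < c) (hδ0 : 0 ≤ δ) (hδ1 : δ < 1)
    (h0 : 0 < a3) (h32 : a3 < a2) (h21 : a2 < 1)
    (hG : G = a3 * (1 - a2) * Real.log a3 - a2 * (1 - a3) * Real.log a2)
    (hD : D = 1 - a2 + a2 * Real.log a2 + (1 - a2) * Real.log a3) :
    0 < G ∧ 2 * D / G + 1 / (c - a3) - 1 / (δ * c + a3) < 0 := by
  have h31 : a3 < 1 := h32.trans h21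
  have hchord := mul_log_chord h0 h32 h21
  have hGpos : 0 < G := by rw [hG]; linarith
  refine ⟨hGpos, ?_⟩
  have hlog : log a3 < a3 - 1 := log_lt_sub_one_of_pos h0 h31.ne
  have hneg : (1 - a2) * (1 + a3) * (1 - a3 + log a3) < 0 :=
    mul_neg_of_pos_of_neg (mul_pos (by linarith) (by linarith)) (by linarith)
  have hkey : D * (1 - a3 ^ 2) + a3 * G < 0 := by
    rw [hG, hD]
    linarith
  have hx2 : 0 < 1 - a3 ^ 2 := by nlinarith
  have hmain : 2 * D / G + 2 * a3 / (1 - a3 ^ 2) < 0 := by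
    rw [div_add_div _ _ hGpos.ne' hx2.ne']
    exact div_neg_of_neg_of_pos (by linarith) (mul_pos hGpos hx2)
  linarith [rational_part_le hc hδ0 hδ1 h0 h31]
end

section
/- Let c > 1 and δ ∈ [0,1). Define on (0,1]: Ψ1(a) = (c−a)/(δc+a), Ψ2(a) = (δc+a)/(c−a), Ψ3(a) = a·log(a)/(δc+a), Ψ4(a) = a·log(a)/(c−a), Ψ5(a) = (a·log(a))²/((c−a)(δc+a)). Set f_{i,1} = Ψ_i' for i = 1,…,5, and recursively f_{i,j} = (f_{i,j−1}/f_{j−1,j−1})' for j = 2,…,5 and i = j,…,5. Then for every a ∈ (0,1]: f_{1,1}(a) = −(c+δc)/(δc+a)² < 0, f_{2,2}(a) = −2(c+δc)(δc+a)/(c−a)³ < 0, f_{3,3}(a) = −(c−a)²(2a+c)/(2a²(c+δc)²) < 0, f_{4,4}(a) = −2(c+δc)/(2a+c)² < 0, and f_{5,5}(a) = (4a+2c)/(a(c+δc)) > 0; consequently Π_{i=1}^5 f_{i,i}(a) = 4/(a³(c−a)(δc+a)) > 0. -/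
/-!
Write `d = δc`, `s = c + d`, `u = d + a`, `v = c - a` and `L = log a`, so that `u' = 1`, `v' = -1`,
`L' = 1/a` and `u + v = s`. Each function `f_{i,j}` has a closed form on the whole open interval
`(0, c)`, which contains `(0, 1]`: a polynomial in `L` with coefficients rational in `a`, where
the degree in `L` never increases along the recursion and only a rational function remains at
`f_{5,5}`. As the closed forms hold on an open set, they may be substituted under `deriv`
(`deriv_eq_of_eqOn`), and every stage becomes the differentiation of an explicit elementary
function. The pivots
* `f_{1,1} = -s/u²`, `f_{2,2} = -2su/v³`, `f_{3,3} = -v²(2a+c)/(2a²s²)`,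
  `f_{4,4} = -2s/(2a+c)²`, `f_{5,5} = (4a+2c)/(as)`

have evident signs, and almost all factors cancel in their product.
-/

open Real

noncomputable def Psi1 (c δ a : ℝ) : ℝ := (c - a) / (δ * c + a)
noncomputable def Psi2 (c δ a : ℝ) : ℝ := (δ * c + a) / (c - a)
noncomputable def Psi3 (c δ a : ℝ) : ℝ := a * Real.log a / (δ * c + a)
noncomputable def Psi4 (c δ a : ℝ) : ℝ := a * Real.log a / (c - a)
noncomputable def Psi5 (c δ a : ℝ) : ℝ :=
  (a * Real.log a) ^ 2 / ((c - a) * (δ * c + a))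

/-- first-stage derivatives `f_{i,1} = Ψᵢ'` -/
noncomputable def f11 (c δ : ℝ) : ℝ → ℝ := deriv (Psi1 c δ)
noncomputable def f21 (c δ : ℝ) : ℝ → ℝ := deriv (Psi2 c δ)
noncomputable def f31 (c δ : ℝ) : ℝ → ℝ := deriv (Psi3 c δ)
noncomputable def f41 (c δ : ℝ) : ℝ → ℝ := deriv (Psi4 c δ)
noncomputable def f51 (c δ : ℝ) : ℝ → ℝ := deriv (Psi5 c δ)

/-- second-stage: `f_{i,2} = (f_{i,1}/f_{1,1})'` -/
noncomputable def f22 (c δ : ℝ) : ℝ → ℝ := deriv fun a => f21 c δ a / f11 c δ a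
noncomputable def f32 (c δ : ℝ) : ℝ → ℝ := deriv fun a => f31 c δ a / f11 c δ a
noncomputable def f42 (c δ : ℝ) : ℝ → ℝ := deriv fun a => f41 c δ a / f11 c δ a
noncomputable def f52 (c δ : ℝ) : ℝ → ℝ := deriv fun a => f51 c δ a / f11 c δ a

/-- third-stage: `f_{i,3} = (f_{i,2}/f_{2,2})'` -/
noncomputable def f33 (c δ : ℝ) : ℝ → ℝ := deriv fun a => f32 c δ a / f22 c δ a
noncomputable def f43 (c δ : ℝ) : ℝ → ℝ := deriv fun a => f42 c δ a / f22 c δ a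
noncomputable def f53 (c δ : ℝ) : ℝ → ℝ := deriv fun a => f52 c δ a / f22 c δ a

/-- fourth-stage: `f_{i,4} = (f_{i,3}/f_{3,3})'` -/
noncomputable def f44 (c δ : ℝ) : ℝ → ℝ := deriv fun a => f43 c δ a / f33 c δ a
noncomputable def f54 (c δ : ℝ) : ℝ → ℝ := deriv fun a => f53 c δ a / f33 c δ a

/-- fifth-stage: `f_{5,5} = (f_{5,4}/f_{4,4})'` -/
noncomputable def f55 (c δ : ℝ) : ℝ → ℝ := deriv fun a => f54 c δ a / f44 c δ a

/-- A closed form valid on the open interval `(0, c)` may be substituted under `deriv`. -/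
lemma deriv_eq_of_eqOn {c x g' : ℝ} {f g : ℝ → ℝ} (hx : x ∈ Set.Ioo 0 c)
    (hfg : ∀ y ∈ Set.Ioo 0 c, f y = g y) (hg : HasDerivAt g g' x) : deriv f x = g' :=
  (hg.congr_of_eventuallyEq (Filter.eventuallyEq_of_mem (isOpen_Ioo.mem_nhds hx) hfg)).deriv

/-- Positivity of the factors occurring in denominators. -/
lemma factors_pos {c δ a : ℝ} (hδ : 0 ≤ δ) (ha : a ∈ Set.Ioo 0 c) :
    0 < a ∧ 0 < c ∧ 0 < δ * c + a ∧ 0 < c - a ∧ 0 < 1 + δ ∧ 0 < 2 * a + c := by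
  obtain ⟨h0, h1⟩ := ha
  have hc : 0 < c := h0.trans h1
  have : 0 ≤ δ * c := by positivity
  refine ⟨h0, hc, ?_, ?_, ?_, ?_⟩ <;> linarith

section Basic

variable (c a : ℝ)

lemma hasDerivAt_u (δ : ℝ) : HasDerivAt (fun x : ℝ => δ * c + x) 1 a :=
  (hasDerivAt_id a).const_add _

lemma hasDerivAt_v : HasDerivAt (fun x : ℝ => c - x) (-1) a :=
  (hasDerivAt_id a).const_sub _

lemma hasDerivAt_w : HasDerivAt (fun x : ℝ => 2 * x + c) 2 a := by
  simpa using ((hasDerivAt_id a).const_mul 2).add_const c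

lemma hasDerivAt_aL (ha : a ≠ 0) : HasDerivAt (fun x : ℝ => x * log x) (log a + 1) a := by
  simpa using Real.hasDerivAt_mul_log ha

end Basic

/-! In each lemma from the second stage on, `g` is the simplified quotient
`f_{i,j-1} / f_{j-1,j-1}` being differentiated. -/

section ClosedForms

variable {c δ a : ℝ}

lemma f11_eq (hδ : 0 ≤ δ) (ha : a ∈ Set.Ioo 0 c) :
    f11 c δ a = -(c + δ * c) / (δ * c + a) ^ 2 := by
  obtain ⟨h0, hc0, hu0, hv0, hs0, hw0⟩ := factors_pos hδ ha
  have hu := hasDerivAt_u c a δ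
  have hv := hasDerivAt_v c a
  refine (HasDerivAt.deriv (f := Psi1 c δ) (hv.fun_div hu hu0.ne')).trans ?_
  field_simp
  ring

lemma f21_eq (hδ : 0 ≤ δ) (ha : a ∈ Set.Ioo 0 c) :
    f21 c δ a = (c + δ * c) / (c - a) ^ 2 := by
  obtain ⟨h0, hc0, hu0, hv0, hs0, hw0⟩ := factors_pos hδ ha
  have hu := hasDerivAt_u c a δ
  have hv := hasDerivAt_v c a
  refine (HasDerivAt.deriv (f := Psi2 c δ) (hu.fun_div hv hv0.ne')).trans ?_
  field_simp
  ring

lemma f31_eq (hδ : 0 ≤ δ) (ha : a ∈ Set.Ioo 0 c) :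
    f31 c δ a = (δ * c * log a + (δ * c + a)) / (δ * c + a) ^ 2 := by
  obtain ⟨h0, hc0, hu0, hv0, hs0, hw0⟩ := factors_pos hδ ha
  have hu := hasDerivAt_u c a δ
  have hal := hasDerivAt_aL a h0.ne'
  refine (HasDerivAt.deriv (f := Psi3 c δ) (hal.fun_div hu hu0.ne')).trans ?_
  field_simp
  ring

lemma f41_eq (hδ : 0 ≤ δ) (ha : a ∈ Set.Ioo 0 c) :
    f41 c δ a = (c * log a + (c - a)) / (c - a) ^ 2 := by
  obtain ⟨h0, hc0, hu0, hv0, hs0, hw0⟩ := factors_pos hδ ha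
  have hv := hasDerivAt_v c a
  have hal := hasDerivAt_aL a h0.ne'
  refine (HasDerivAt.deriv (f := Psi4 c δ) (hal.fun_div hv hv0.ne')).trans ?_
  field_simp
  ring

lemma f51_eq (hδ : 0 ≤ δ) (ha : a ∈ Set.Ioo 0 c) :
    f51 c δ a = (2 * (a * log a) * (log a + 1) * ((c - a) * (δ * c + a))
        - (a * log a) ^ 2 * ((c - a) - (δ * c + a))) / ((c - a) * (δ * c + a)) ^ 2 := by
  obtain ⟨h0, hc0, hu0, hv0, hs0, hw0⟩ := factors_pos hδ ha
  have hu := hasDerivAt_u c a δ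
  have hv := hasDerivAt_v c a
  have hal := hasDerivAt_aL a h0.ne'
  refine (HasDerivAt.deriv (f := Psi5 c δ)
    ((hal.fun_pow 2).fun_div (hv.fun_mul hu) (mul_pos hv0 hu0).ne')).trans ?_
  field_simp
  ring

lemma f22_eq (hδ : 0 ≤ δ) (ha : a ∈ Set.Ioo 0 c) :
    f22 c δ a = -(2 * (c + δ * c) * (δ * c + a)) / (c - a) ^ 3 := by
  obtain ⟨h0, hc0, hu0, hv0, hs0, hw0⟩ := factors_pos hδ ha
  have hu := hasDerivAt_u c a δ
  have hv := hasDerivAt_v c a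
  refine deriv_eq_of_eqOn
    (g := fun x => -((δ * c + x) ^ 2 / (c - x) ^ 2))
    ha (fun x hx => ?_)
    ((((hu.fun_pow 2).fun_div (hv.fun_pow 2) (pow_pos hv0 2).ne').fun_neg).congr_deriv ?_)
  · obtain ⟨h0, -, hu0, hv0, -, hw0⟩ := factors_pos hδ hx
    rw [f21_eq hδ hx, f11_eq hδ hx]
    field_simp
  · field_simp
    ring

lemma f32_eq (hδ : 0 ≤ δ) (ha : a ∈ Set.Ioo 0 c) :
    f32 c δ a = -(δ * c + a) / (a * (c + δ * c)) := by
  obtain ⟨h0, hc0, hu0, hv0, hs0, hw0⟩ := factors_pos hδ ha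
  have hu := hasDerivAt_u c a δ
  have hl := hasDerivAt_log h0.ne'
  refine deriv_eq_of_eqOn
    (g := fun x => -(δ * c * log x + (δ * c + x)) / (c + δ * c))
    ha (fun x hx => ?_)
    ((((hl.const_mul (δ * c)).fun_add hu).fun_neg.div_const (c + δ * c)).congr_deriv ?_)
  · obtain ⟨h0, -, hu0, hv0, -, hw0⟩ := factors_pos hδ hx
    rw [f31_eq hδ hx, f11_eq hδ hx]
    field_simp
  · field_simp

lemma f42_eq (hδ : 0 ≤ δ) (ha : a ∈ Set.Ioo 0 c) :
    f42 c δ a = -(2 * (δ * c + a) * (c + δ * c) * (c * log a + (c - a)) / (c - a) ^ 3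
        + (δ * c + a) ^ 2 / (a * (c - a))) / (c + δ * c) := by
  obtain ⟨h0, hc0, hu0, hv0, hs0, hw0⟩ := factors_pos hδ ha
  have hu := hasDerivAt_u c a δ
  have hv := hasDerivAt_v c a
  have hl := hasDerivAt_log h0.ne'
  refine deriv_eq_of_eqOn
    (g := fun x => -((δ * c + x) ^ 2 * (c * log x + (c - x)) / (c - x) ^ 2) / (c + δ * c))
    ha (fun x hx => ?_)
    (((((hu.fun_pow 2).fun_mul ((hl.const_mul c).fun_add hv)).fun_div (hv.fun_pow 2)
      (pow_pos hv0 2).ne').fun_neg.div_const (c + δ * c)).congr_deriv ?_)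
  · obtain ⟨h0, -, hu0, hv0, -, hw0⟩ := factors_pos hδ hx
    rw [f41_eq hδ hx, f11_eq hδ hx]
    field_simp
  · field_simp
    ring

lemma f52_eq (hδ : 0 ≤ δ) (ha : a ∈ Set.Ioo 0 c) :
    f52 c δ a =
      -(2 * (δ * c + a)) * (c ^ 2 * log a ^ 2 + (c - a) * (3 * c - a) * log a + (c - a) ^ 2)
        / ((c + δ * c) * (c - a) ^ 3) := by
  obtain ⟨h0, hc0, hu0, hv0, hs0, hw0⟩ := factors_pos hδ ha
  have hu := hasDerivAt_u c a δ
  have hv := hasDerivAt_v c a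
  have hal := hasDerivAt_aL a h0.ne'
  have hl := hasDerivAt_log h0.ne'
  refine deriv_eq_of_eqOn
    (g := fun x => -((2 * (x * log x) * (log x + 1) * ((c - x) * (δ * c + x))
      - (x * log x) ^ 2 * ((c - x) - (δ * c + x))) / (c - x) ^ 2) / (c + δ * c))
    ha (fun x hx => ?_)
    ((((((hal.const_mul 2).fun_mul (hl.add_const 1)).fun_mul (hv.fun_mul hu) |>.fun_sub
      ((hal.fun_pow 2).fun_mul (hv.fun_sub hu))).fun_div (hv.fun_pow 2)
      (pow_pos hv0 2).ne').fun_neg.div_const (c + δ * c)).congr_deriv ?_)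
  · obtain ⟨h0, -, hu0, hv0, -, hw0⟩ := factors_pos hδ hx
    rw [f51_eq hδ hx, f11_eq hδ hx]
    field_simp
  · field_simp
    ring

lemma f33_eq (hδ : 0 ≤ δ) (ha : a ∈ Set.Ioo 0 c) :
    f33 c δ a = -((c - a) ^ 2 * (2 * a + c)) / (2 * a ^ 2 * (c + δ * c) ^ 2) := by
  obtain ⟨h0, hc0, hu0, hv0, hs0, hw0⟩ := factors_pos hδ ha
  have hid := hasDerivAt_id' a
  have hv := hasDerivAt_v c a
  refine deriv_eq_of_eqOn
    (g := fun x => (c - x) ^ 3 / x / (2 * (c + δ * c) ^ 2))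
    ha (fun x hx => ?_)
    ((((hv.fun_pow 3).fun_div hid h0.ne').div_const (2 * (c + δ * c) ^ 2)).congr_deriv ?_)
  · obtain ⟨h0, -, hu0, hv0, -, hw0⟩ := factors_pos hδ hx
    rw [f32_eq hδ hx, f22_eq hδ hx]
    field_simp
  · field_simp
    ring

lemma f43_eq (hδ : 0 ≤ δ) (ha : a ∈ Set.Ioo 0 c) :
    f43 c δ a = (c - a) ^ 2 * (2 * a - δ * c) / (2 * a ^ 2 * (c + δ * c) ^ 2) := by
  obtain ⟨h0, hc0, hu0, hv0, hs0, hw0⟩ := factors_pos hδ ha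
  have hid := hasDerivAt_id' a
  have hu := hasDerivAt_u c a δ
  have hv := hasDerivAt_v c a
  have hl := hasDerivAt_log h0.ne'
  refine deriv_eq_of_eqOn
    (g := fun x => (c * log x + (c - x)) / (c + δ * c)
      + (δ * c + x) * (c - x) ^ 2 / x / (2 * (c + δ * c) ^ 2))
    ha (fun x hx => ?_)
    (((((hl.const_mul c).fun_add hv).div_const (c + δ * c)).fun_add
      (((hu.fun_mul (hv.fun_pow 2)).fun_div hid h0.ne').div_const (2 * (c + δ * c) ^ 2))).congr_deriv ?_)
  · obtain ⟨h0, -, hu0, hv0, -, hw0⟩ := factors_pos hδ hx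
    rw [f42_eq hδ hx, f22_eq hδ hx]
    field_simp
  · field_simp
    ring

lemma f53_eq (hδ : 0 ≤ δ) (ha : a ∈ Set.Ioo 0 c) :
    f53 c δ a = (c - a) ^ 2 * (2 * log a + 3) / (a * (c + δ * c) ^ 2) := by
  obtain ⟨h0, hc0, hu0, hv0, hs0, hw0⟩ := factors_pos hδ ha
  have hv := hasDerivAt_v c a
  have hl := hasDerivAt_log h0.ne'
  refine deriv_eq_of_eqOn
    (g := fun x => (c ^ 2 * log x ^ 2 + (c - x) * (3 * c - x) * log x + (c - x) ^ 2) / (c + δ * c) ^ 2)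
    ha (fun x hx => ?_)
    ((((((hl.fun_pow 2).const_mul (c ^ 2)).fun_add ((hv.fun_mul (hasDerivAt_v (3 * c) a)).fun_mul hl)).fun_add
      (hv.fun_pow 2)).div_const ((c + δ * c) ^ 2)).congr_deriv ?_)
  · obtain ⟨h0, -, hu0, hv0, -, hw0⟩ := factors_pos hδ hx
    rw [f52_eq hδ hx, f22_eq hδ hx]
    field_simp
  · field_simp
    ring

lemma f44_eq (hδ : 0 ≤ δ) (ha : a ∈ Set.Ioo 0 c) :
    f44 c δ a = -(2 * (c + δ * c)) / (2 * a + c) ^ 2 := by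
  obtain ⟨h0, hc0, hu0, hv0, hs0, hw0⟩ := factors_pos hδ ha
  have hid := hasDerivAt_id' a
  have hw := hasDerivAt_w c a
  refine deriv_eq_of_eqOn
    (g := fun x => -((2 * x - δ * c) / (2 * x + c)))
    ha (fun x hx => ?_)
    (((((hid.const_mul 2).sub_const (δ * c)).fun_div hw hw0.ne').fun_neg).congr_deriv ?_)
  · obtain ⟨h0, -, hu0, hv0, -, hw0⟩ := factors_pos hδ hx
    rw [f43_eq hδ hx, f33_eq hδ hx]
    field_simp
  · field_simp
    ring

lemma f54_eq (hδ : 0 ≤ δ) (ha : a ∈ Set.Ioo 0 c) :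
    f54 c δ a = -(4 * c * log a + 8 * a + 10 * c) / (2 * a + c) ^ 2 := by
  obtain ⟨h0, hc0, hu0, hv0, hs0, hw0⟩ := factors_pos hδ ha
  have hid := hasDerivAt_id' a
  have hw := hasDerivAt_w c a
  have hl := hasDerivAt_log h0.ne'
  refine deriv_eq_of_eqOn
    (g := fun x => -(2 * x * (2 * log x + 3) / (2 * x + c)))
    ha (fun x hx => ?_)
    (((((hid.const_mul 2).fun_mul ((hl.const_mul 2).add_const 3)).fun_div hw hw0.ne').fun_neg).congr_deriv ?_)
  · obtain ⟨h0, -, hu0, hv0, -, hw0⟩ := factors_pos hδ hx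
    rw [f53_eq hδ hx, f33_eq hδ hx]
    field_simp
  · field_simp
    ring

lemma f55_eq (hδ : 0 ≤ δ) (ha : a ∈ Set.Ioo 0 c) :
    f55 c δ a = (4 * a + 2 * c) / (a * (c + δ * c)) := by
  obtain ⟨h0, hc0, hu0, hv0, hs0, hw0⟩ := factors_pos hδ ha
  have hid := hasDerivAt_id' a
  have hl := hasDerivAt_log h0.ne'
  refine deriv_eq_of_eqOn
    (g := fun x => (2 * c * log x + 4 * x + 5 * c) / (c + δ * c))
    ha (fun x hx => ?_)
    (((((hl.const_mul (2 * c)).fun_add (hid.const_mul 4)).add_const (5 * c)).div_const (c + δ * c)).congr_deriv ?_)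
  · obtain ⟨h0, -, hu0, hv0, -, hw0⟩ := factors_pos hδ hx
    rw [f54_eq hδ hx, f44_eq hδ hx]
    field_simp
    ring
  · field_simp
    ring

end ClosedForms

/-- The Chebyshev-system computation from the proof of Theorem 1: explicit formulas and signs
of `f_{1,1}, …, f_{5,5}` on `(0, 1]`, and positivity of their product. -/
theorem chebyshev_derivatives
    (c δ : ℝ) (hc : 1 < c) (hδ0 : 0 ≤ δ) (hδ1 : δ < 1) :
    ∀ a ∈ Set.Ioc (0 : ℝ) 1,
      (f11 c δ a = -(c + δ * c) / (δ * c + a) ^ 2 ∧ f11 c δ a < 0) ∧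
      (f22 c δ a = -(2 * (c + δ * c) * (δ * c + a)) / (c - a) ^ 3 ∧ f22 c δ a < 0) ∧
      (f33 c δ a = -((c - a) ^ 2 * (2 * a + c)) / (2 * a ^ 2 * (c + δ * c) ^ 2) ∧
        f33 c δ a < 0) ∧
      (f44 c δ a = -(2 * (c + δ * c)) / (2 * a + c) ^ 2 ∧ f44 c δ a < 0) ∧
      (f55 c δ a = (4 * a + 2 * c) / (a * (c + δ * c)) ∧ 0 < f55 c δ a) ∧
      (f11 c δ a * f22 c δ a * f33 c δ a * f44 c δ a * f55 c δ a
        = 4 / (a ^ 3 * (c - a) * (δ * c + a)) ∧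
       0 < f11 c δ a * f22 c δ a * f33 c δ a * f44 c δ a * f55 c δ a) := by
  intro a ha
  have ha' : a ∈ Set.Ioo 0 c := ⟨ha.1, ha.2.trans_lt hc⟩
  obtain ⟨h0, hc0, hu0, hv0, hs0, hw0⟩ := factors_pos hδ0 ha'
  have hs : 0 < c + δ * c := by positivity
  rw [f11_eq hδ0 ha', f22_eq hδ0 ha', f33_eq hδ0 ha', f44_eq hδ0 ha', f55_eq hδ0 ha']
  have hprod : -(c + δ * c) / (δ * c + a) ^ 2
      * (-(2 * (c + δ * c) * (δ * c + a)) / (c - a) ^ 3)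
      * (-((c - a) ^ 2 * (2 * a + c)) / (2 * a ^ 2 * (c + δ * c) ^ 2))
      * (-(2 * (c + δ * c)) / (2 * a + c) ^ 2) * ((4 * a + 2 * c) / (a * (c + δ * c)))
      = 4 / (a ^ 3 * (c - a) * (δ * c + a)) := by
    field_simp
    ring
  refine ⟨⟨rfl, ?_⟩, ⟨rfl, ?_⟩, ⟨rfl, ?_⟩, ⟨rfl, ?_⟩, ⟨rfl, by positivity⟩, hprod, ?_⟩
  · exact div_neg_of_neg_of_pos (neg_neg_of_pos (by positivity)) (by positivity)
  · exact div_neg_of_neg_of_pos (neg_neg_of_pos (by positivity)) (by positivity)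
  · exact div_neg_of_neg_of_pos (neg_neg_of_pos (by positivity)) (by positivity)
  · exact div_neg_of_neg_of_pos (neg_neg_of_pos (by positivity)) (by positivity)
  · rw [hprod]
    positivity
end
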